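/- arXiv:1208.2785 — 5 statements merged into one kernel-verified Lean document; each statement's English description precedes it below -/
import Mathlib

section
/- For every finite set P of n points in ℝ², there exist points p, q ∈ P such that every axis-parallel rectangle R with |R ∩ P| > (5/8)·n contains p or q. In other words, every finite planar point set admits a strong (5/8)-net of size 2 with respect to axis-parallel rectangles. -/
/-- An axis-parallel rectangle in ℝ²: a product of closed intervals. -/
def IsRect (R : Set (EuclideanSpace ℝ (Fin 2))) : Prop :=
  ∃ a b c d : ℝ, R = {x | a ≤ x 0 ∧ x 0 ≤ b ∧ c ≤ x 1 ∧ x 1 ≤ d}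

/-!
A box missing `p` is disjoint from one of the `2d` closed axis-parallel half-spaces bounded by
`p`, so it suffices to find `p` and `q` such that any half-space at `p` together with any half-space
at `q` contains `3n / (4d)` of the `n` points. Choose `p` with `n / (2d)` points in each of its
half-spaces. As `d ≥ 2`, one of the two half-spaces at `p` normal to each axis has `3n / (4d)`
points; let `W` consist of the other `d` directions. Call a half-space at `p` light if it has fewer
than `3n / (4d)` points, so that its direction lies in `W`. Choose `q` with `3n / (4d)` points in
its half-spaces in the directions of `W`, which puts `q` outside every light half-space at `p`, and
with `3n / (4d) - n / (2d)` points outside the light half-spaces at `p` in its other half-spaces.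
These `d` conditions of each kind rule out fewer than `d * 3n / (4d) + d * n / (4d) = n` points.
-/

namespace FiveEighthsNet

open Finset

lemma exists_le_mul_and_mul_sub_one_lt {n m : ℕ} (hn : 0 < n) (hm : 0 < m) :
    ∃ k, n ≤ m * k ∧ m * (k - 1) < n := by
  have hceil : ∀ c, n ⌈/⌉ m ≤ c ↔ n ≤ m * c := fun c => ceilDiv_le_iff_le_mul hm
  have hpos : 0 < n ⌈/⌉ m := by
    simpa [hn.ne', Nat.pos_iff_ne_zero] using (hceil 0).not
  exact ⟨n ⌈/⌉ m, (hceil _).1 le_rfl,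
    not_le.1 fun h => (Nat.sub_one_lt hpos.ne').not_ge ((hceil _).2 h)⟩

section Halfspace

open scoped Classical in
/-- The points of `P` in the closed half-space bounded by `p`, where a direction is encoded as a
total preorder `r` on the points. -/
noncomputable def halfspace {α : Type*} (r : α → α → Prop) (P : Finset α) (p : α) : Finset α :=
  {t ∈ P | r t p}

variable {α κ : Type*} {P : Finset α} {p q t : α}

@[simp]
lemma mem_halfspace {r : α → α → Prop} : t ∈ halfspace r P p ↔ t ∈ P ∧ r t p := by
  simp only [halfspace, mem_filter]

lemma halfspace_subset (r : α → α → Prop) (P : Finset α) (p : α) : halfspace r P p ⊆ P :=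
  fun _ ht => (mem_halfspace.1 ht).1

lemma halfspace_mono {Q : Finset α} (r : α → α → Prop) (p : α) (h : Q ⊆ P) :
    halfspace r Q p ⊆ halfspace r P p :=
  fun _ ht => mem_halfspace.2 ⟨h (mem_halfspace.1 ht).1, (mem_halfspace.1 ht).2⟩

lemma halfspace_subset_halfspace {r : α → α → Prop} [IsTrans α r] (h : r q p) :
    halfspace r P q ⊆ halfspace r P p := fun _ ht =>
  mem_halfspace.2 ⟨(mem_halfspace.1 ht).1, _root_.trans (mem_halfspace.1 ht).2 h⟩

lemma card_filter_card_halfspace_lt_le (r : α → α → Prop) [IsTrans α r] [Std.Total r]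
    (P : Finset α) (k : ℕ) : #{p ∈ P | #(halfspace r P p) < k} ≤ k - 1 := by
  set B := {p ∈ P | #(halfspace r P p) < k}
  obtain hempty | hne := B.eq_empty_or_nonempty
  · simp only [hempty, card_empty, Nat.zero_le]
  obtain ⟨m, hm, hmax⟩ := B.exists_max_image (fun p => #(halfspace r P p)) hne
  have hsub : B ⊆ halfspace r P m := fun b hb => by
    have hbP : b ∈ P := (mem_filter.1 hb).1
    obtain hbm | hmb := Std.Total.total (r := r) b m
    · exact mem_halfspace.2 ⟨hbP, hbm⟩
    · rw [eq_of_subset_of_card_le (halfspace_subset_halfspace hmb) (hmax b hb)]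
      exact mem_halfspace.2 ⟨hbP, refl_of r b⟩
  exact Nat.le_sub_one_of_lt ((card_le_card hsub).trans_lt (mem_filter.1 hm).2)

lemma exists_forall_le_card_halfspace [Fintype κ] (r : κ → α → α → Prop)
    [∀ i, IsTrans α (r i)] [∀ i, Std.Total (r i)] (A : Finset α) (S : κ → Finset α) (k : κ → ℕ)
    (hk : ∑ i, (k i - 1) < #A) :
    ∃ p ∈ A, ∀ i, p ∈ S i → k i ≤ #(halfspace (r i) (S i) p) := by
  classical
  let shallow (i : κ) : Finset α := {p ∈ S i | #(halfspace (r i) (S i) p) < k i}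
  have hcard : #(univ.biUnion shallow) < #A := calc
    #(univ.biUnion shallow) ≤ ∑ i, #(shallow i) := card_biUnion_le
    _ ≤ ∑ i, (k i - 1) :=
      sum_le_sum fun i _ => card_filter_card_halfspace_lt_le (r i) (S i) (k i)
    _ < #A := hk
  obtain ⟨p, hpA, hp⟩ := exists_mem_notMem_of_card_lt_card hcard
  refine ⟨p, hpA, fun i hi => not_lt.1 fun hlt => hp ?_⟩
  exact mem_biUnion.2 ⟨i, mem_univ i, mem_filter.2 ⟨hi, hlt⟩⟩

lemma exists_forall_le_card_halfspace_union [DecidableEq α] [Fintype κ] [DecidableEq κ]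
    (r : κ → α → α → Prop) [∀ i, IsTrans α (r i)] [∀ i, Std.Total (r i)] (P : Finset α) (p : α)
    {j k : ℕ} (W : Finset κ)
    (hj : ∀ i ∈ W, j ≤ #(halfspace (r i) P p)) (hk : ∀ i ∉ W, k ≤ #(halfspace (r i) P p))
    (hcard : #W * (k - 1) + #Wᶜ * (k - j - 1) < #P) :
    ∃ q ∈ P, ∀ a b, k ≤ #(halfspace (r a) P p ∪ halfspace (r b) P q) := by
  classical
  let Q : Finset α := {t ∈ P | ∀ i, #(halfspace (r i) P p) < k → ¬ r i t p}
  have hsum : ∑ i, ((if i ∈ W then k else k - j) - 1) < #P := by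
    have hcompl : (univ.filter fun i => i ∉ W) = Wᶜ := by ext i; simp
    simpa [apply_ite (· - 1), sum_ite, hcompl] using hcard
  obtain ⟨q, hqP, hq⟩ := exists_forall_le_card_halfspace r P (fun i => if i ∈ W then P else Q)
    (fun i => if i ∈ W then k else k - j) hsum
  have hqW : ∀ i ∈ W, k ≤ #(halfspace (r i) P q) := fun i hi => by
    simpa only [hi, if_true, hqP, true_imp_iff] using hq i
  have light_mem : ∀ i, #(halfspace (r i) P p) < k → i ∈ W := fun i hi =>
    by_contra fun hiW => hi.not_ge (hk i hiW)
  have hqQ : q ∈ Q := mem_filter.2 ⟨hqP, fun i hi hqp =>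
    hi.not_ge ((hqW i (light_mem i hi)).trans (card_le_card (halfspace_subset_halfspace hqp)))⟩
  refine ⟨q, hqP, fun a b => ?_⟩
  obtain ha | ha := le_or_gt k #(halfspace (r a) P p)
  · exact ha.trans (card_le_card subset_union_left)
  by_cases hb : b ∈ W
  · exact (hqW b hb).trans (card_le_card subset_union_right)
  have hqb : k - j ≤ #(halfspace (r b) Q q) := by
    simpa only [hb, if_false, hqQ, true_imp_iff] using hq b
  have hdisj : Disjoint (halfspace (r a) P p) (halfspace (r b) Q q) :=
    disjoint_left.2 fun t htp htq =>
      (mem_filter.1 (mem_halfspace.1 htq).1).2 a ha (mem_halfspace.1 htp).2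
  calc k ≤ #(halfspace (r a) P p) + #(halfspace (r b) Q q) := by
        have := hj a (light_mem a ha)
        omega
    _ = #(halfspace (r a) P p ∪ halfspace (r b) Q q) := (card_union_of_disjoint hdisj).symm
    _ ≤ #(halfspace (r a) P p ∪ halfspace (r b) P q) :=
      card_le_card (union_subset_union_right (halfspace_mono (r b) q (filter_subset _ _)))

lemma card_le_card_halfspace_add {r r' : α → α → Prop} (P : Finset α)
    (h : ∀ t, r t p ∨ r' t p) : #P ≤ #(halfspace r P p) + #(halfspace r' P p) := by
  classical
  refine (card_le_card fun t ht => ?_).trans (card_union_le _ _)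
  simpa only [mem_union, mem_halfspace, ht, true_and] using h t

lemma exists_forall_notMem_le_card_halfspace {ι : Type*} [Fintype ι] [DecidableEq ι]
    (r : ι × Bool → α → α → Prop) (P : Finset α) {k : ℕ}
    (hr : ∀ i t, r (i, true) t p ∨ r (i, false) t p) (hk : 2 * (k - 1) < #P) :
    ∃ W : Finset (ι × Bool), #W = Fintype.card ι ∧ #Wᶜ = Fintype.card ι ∧
      ∀ i ∉ W, k ≤ #(halfspace (r i) P p) := by
  have exists_heavy : ∀ i, ∃ s, k ≤ #(halfspace (r (i, s)) P p) := fun i => by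
    by_contra! hlight
    have hcover := card_le_card_halfspace_add P (hr i)
    have := hlight true
    have := hlight false
    omega
  choose s hs using exists_heavy
  let W : Finset (ι × Bool) := univ.image fun i => (i, !s i)
  have hW : #W = Fintype.card ι := card_image_of_injective _ fun i i' h => congrArg Prod.fst h
  refine ⟨W, hW, ?_, ?_⟩
  · rw [card_compl, hW, Fintype.card_prod, Fintype.card_bool]
    omega
  · rintro ⟨i, b⟩ hb
    have hbs : b = s i := by simpa [W, eq_comm] using hb
    exact hbs ▸ hs i

theorem exists_pair_three_mul_card_le_card_halfspace_union [DecidableEq α] {ι : Type*}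
    [Fintype ι] [Nontrivial ι] (r : ι × Bool → α → α → Prop) [∀ i, IsTrans α (r i)]
    [∀ i, Std.Total (r i)] (hr : ∀ i s t, r (i, true) s t ∨ r (i, false) s t) (hP : P.Nonempty) :
    ∃ p ∈ P, ∃ q ∈ P, ∀ a b,
      3 * #P ≤ 4 * Fintype.card ι * #(halfspace (r a) P p ∪ halfspace (r b) P q) := by
  classical
  set d := Fintype.card ι with hd
  have hd2 : 1 < d := Fintype.one_lt_card
  have hn : 0 < #P := hP.card_pos
  obtain ⟨j, hnj, hjn⟩ := exists_le_mul_and_mul_sub_one_lt hn (by omega : 0 < 2 * d)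
  obtain ⟨k, hnk, hkn⟩ :=
    exists_le_mul_and_mul_sub_one_lt (by omega : 0 < 3 * #P) (by omega : 0 < 4 * d)
  obtain ⟨p, hpP, hp⟩ := exists_forall_le_card_halfspace r P (fun _ => P) (fun _ => j)
    (by simpa [← hd, mul_comm d] using hjn)
  have hk : 2 * (k - 1) < #P := by
    have : 8 * (k - 1) ≤ 4 * d * (k - 1) := Nat.mul_le_mul_right _ (by omega)
    omega
  obtain ⟨W, hW, hWc, hWheavy⟩ := exists_forall_notMem_le_card_halfspace r P (hr · · p) hk
  obtain ⟨q, hqP, hq⟩ := exists_forall_le_card_halfspace_union r P p W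
    (fun i _ => hp i hpP) hWheavy (by
      rw [hW, hWc, ← hd, Nat.sub_right_comm, Nat.mul_sub d (k - 1) j]
      rw [mul_assoc] at hnj hkn
      omega)
  exact ⟨p, hpP, q, hqP, fun a b => hnk.trans (Nat.mul_le_mul_left _ (hq a b))⟩

end Halfspace

section Box

variable {α ι : Type*} {β : ι → Type*} [∀ i, LinearOrder (β i)]

/-- The axis-parallel box with opposite corners `a` and `b`, for points with coordinates `f`. -/
def box (f : ∀ i, α → β i) (a b : ∀ i, β i) : Set α :=
  {t | ∀ i, f i t ∈ Set.Icc (a i) (b i)}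

/-- The total preorder of an axis direction: the `i`-th coordinate for `(i, true)`, and its
reverse for `(i, false)`. -/
def axisLE (f : ∀ i, α → β i) : ι × Bool → α → α → Prop
  | (i, true) => fun s t => f i s ≤ f i t
  | (i, false) => fun s t => f i t ≤ f i s

instance isTrans_axisLE (f : ∀ i, α → β i) : ∀ i, IsTrans α (axisLE f i)
  | (_, true) => ⟨fun _ _ _ => le_trans⟩
  | (_, false) => ⟨fun _ _ _ h h' => le_trans h' h⟩

instance total_axisLE (f : ∀ i, α → β i) : ∀ i, Std.Total (axisLE f i)
  | (_, true) => ⟨fun _ _ => le_total _ _⟩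
  | (_, false) => ⟨fun _ _ => le_total _ _⟩

lemma exists_forall_mem_box_not_axisLE {f : ∀ i, α → β i} {a b : ∀ i, β i} {p : α}
    (hp : p ∉ box f a b) : ∃ i, ∀ t ∈ box f a b, ¬ axisLE f i t p := by
  obtain ⟨i, hi⟩ := not_forall.1 hp
  obtain ha | hb := not_and_or.1 hi
  · exact ⟨(i, true), fun t ht htp => ha ((ht i).1.trans htp)⟩
  · exact ⟨(i, false), fun t ht htp => hb (le_trans htp (ht i).2)⟩

lemma exists_ncard_box_add_card_halfspace_union_le [DecidableEq α] {f : ∀ i, α → β i}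
    {a b : ∀ i, β i} (P : Finset α) {p q : α} (hp : p ∉ box f a b) (hq : q ∉ box f a b) :
    ∃ i j, (box f a b ∩ P).ncard +
      #(halfspace (axisLE f i) P p ∪ halfspace (axisLE f j) P q) ≤ #P := by
  obtain ⟨i, hi⟩ := exists_forall_mem_box_not_axisLE hp
  obtain ⟨j, hj⟩ := exists_forall_mem_box_not_axisLE hq
  refine ⟨i, j, ?_⟩
  set H := halfspace (axisLE f i) P p ∪ halfspace (axisLE f j) P q
  have hH : H ⊆ P := union_subset (halfspace_subset _ _ _) (halfspace_subset _ _ _)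
  have hbox : box f a b ∩ P ⊆ (P \ H : Finset α) := fun t ⟨htR, htP⟩ => by
    simp [H, mem_coe.1 htP, hi t htR, hj t htR]
  have hncard := Set.ncard_le_ncard hbox
  rw [Set.ncard_coe_finset] at hncard
  have := card_sdiff_add_card_eq_card hH
  omega

end Box

end FiveEighthsNet

open FiveEighthsNet in
theorem strong_five_eighths_net_size_two_general {α ι : Type*} {β : ι → Type*} [Fintype ι]
    [Nontrivial ι] [∀ i, LinearOrder (β i)] (f : ∀ i, α → β i) (P : Finset α) (hP : P.Nonempty) :
    ∃ p ∈ P, ∃ q ∈ P, ∀ a b : ∀ i, β i,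
      (1 - 3 / (4 * Fintype.card ι) : ℝ) * P.card < ((box f a b ∩ P).ncard : ℝ) →
        p ∈ box f a b ∨ q ∈ box f a b := by
  classical
  obtain ⟨p, hp, q, hq, hpq⟩ :=
    exists_pair_three_mul_card_le_card_halfspace_union (axisLE f) (fun i s t => le_total _ _) hP
  refine ⟨p, hp, q, hq, fun a b => ?_⟩
  contrapose!
  rintro ⟨hpR, hqR⟩
  obtain ⟨i, j, hij⟩ := exists_ncard_box_add_card_halfspace_union_le P hpR hqR
  set H := halfspace (axisLE f i) P p ∪ halfspace (axisLE f j) P q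
  have hd : (0 : ℝ) < 4 * Fintype.card ι :=
    mul_pos four_pos (Nat.cast_pos.2 Fintype.card_pos)
  have hH : 3 / (4 * Fintype.card ι) * (P.card : ℝ) ≤ H.card := by
    rw [div_mul_eq_mul_div, div_le_iff₀' hd]
    exact_mod_cast hpq i j
  have hcard : ((box f a b ∩ P).ncard + H.card : ℝ) ≤ P.card := by exact_mod_cast hij
  linarith

/-- Every finite planar point set admits a strong (5/8)-net of size 2 with respect to
axis-parallel rectangles. -/
theorem strong_five_eighths_net_size_two (P : Finset (EuclideanSpace ℝ (Fin 2)))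
    (hP : P.Nonempty) :
    ∃ p ∈ P, ∃ q ∈ P, ∀ R : Set (EuclideanSpace ℝ (Fin 2)), IsRect R →
      (5 / 8 : ℝ) * P.card < ((R ∩ ↑P).ncard : ℝ) → p ∈ R ∨ q ∈ R := by
  obtain ⟨p, hp, q, hq, hpq⟩ :=
    strong_five_eighths_net_size_two_general (fun i (x : EuclideanSpace ℝ (Fin 2)) => x i) P hP
  refine ⟨p, hp, q, hq, ?_⟩
  rintro R ⟨a, b, c, d, rfl⟩ hR
  have hbox : {x : EuclideanSpace ℝ (Fin 2) | a ≤ x 0 ∧ x 0 ≤ b ∧ c ≤ x 1 ∧ x 1 ≤ d} =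
      FiveEighthsNet.box (fun i x => x i) ![a, c] ![b, d] := by
    ext x
    simp [FiveEighthsNet.box, Fin.forall_fin_two, and_assoc]
  have hratio : (1 - 3 / (4 * Fintype.card (Fin 2)) : ℝ) = 5 / 8 := by norm_num
  rw [hbox] at hR ⊢
  exact hpq _ _ (hratio ▸ hR)
end

section
/- For all integers x ≥ y ≥ 0 with z = ⌊(x+y)/2⌋, the quantities ε_i^R satisfy ε_{2(x+y)+1}^R ≤ max( (3/4)·ε_x^R , (ε_y^R · ε_z^R)/(ε_y^R + ε_z^R) ). -/
/-- `Q` is a strong ε-net of `P` with respect to axis-parallel rectangles. -/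
def IsRectNet (P Q : Finset (EuclideanSpace ℝ (Fin 2))) (ε : ℝ) : Prop :=
  Q ⊆ P ∧ ∀ R : Set (EuclideanSpace ℝ (Fin 2)), IsRect R →
    ε * P.card < ((R ∩ ↑P).ncard : ℝ) → ∃ q ∈ Q, q ∈ R

/-- `epsR i` is the infimum of the ε ∈ [0,1] such that every finite planar point set
admits a strong ε-net of size at most `i` with respect to axis-parallel rectangles. -/
noncomputable def epsR (i : ℕ) : ℝ :=
  sInf {ε : ℝ | ε ∈ Set.Icc (0 : ℝ) 1 ∧
    ∀ P : Finset (EuclideanSpace ℝ (Fin 2)),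
      ∃ Q : Finset (EuclideanSpace ℝ (Fin 2)), Q.card ≤ i ∧ IsRectNet P Q ε}

/-!
In each of the four coordinate directions, fewer than a quarter of the points `q ∈ P` have more than
`3/4` of `P` strictly beyond them, so some `q` is exceptional in no direction. A rectangle avoiding
`q` lies in one of the four open half-planes bounded by the axis-parallel lines through `q`. For
each opposite pair of half-planes, with point sets `A` and `B` and `|B| ≤ |A|`, spend `x + y` points
on nets of `A` and `B`: either `z` points on each, or `x` points on `A` and `y` points on `B`. Since
`|A| + |B| ≤ |P|`, if the first choice fails because `A` is too large, then `B` is so small that `y`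
points suffice for it, while `x` points suffice for `A` because `|A| ≤ 3/4 |P|`.
-/

open scoped Finset

section Order

variable {α β : Type*} [LinearOrder β]

theorem card_filter_le_card_filter_lt_le (P : Finset α) (f : α → β) (m : ℕ) :
    #{q ∈ P | m ≤ #{p ∈ P | f q < f p}} ≤ #P - m := by
  classical
  set S := {q ∈ P | m ≤ #{p ∈ P | f q < f p}}
  obtain hempty | hne := S.eq_empty_or_nonempty
  · simp [hempty]
  obtain ⟨q, hq, hmax⟩ := S.exists_max_image f hne
  have hdisj : Disjoint S {p ∈ P | f q < f p} :=
    Finset.disjoint_left.2 fun p hp hqp => (hmax p hp).not_gt (Finset.mem_filter.1 hqp).2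
  have hle : #S + #{p ∈ P | f q < f p} ≤ #P := by
    rw [← Finset.card_union_of_disjoint hdisj]
    exact Finset.card_le_card
      (Finset.union_subset (Finset.filter_subset _ _) (Finset.filter_subset _ _))
  have hm : m ≤ #{p ∈ P | f q < f p} := (Finset.mem_filter.1 hq).2
  lia

theorem exists_forall_card_filter_lt_and_gt_lt {ι : Type*} [Fintype ι] (f : ι → α → β)
    {P : Finset α} {m : ℕ} (hm : 2 * Fintype.card ι * (#P - m) < #P) :
    ∃ q ∈ P, ∀ i, #{p ∈ P | f i q < f i p} < m ∧ #{p ∈ P | f i p < f i q} < m := by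
  classical
  let bad (i : ι) : Finset α :=
    {q ∈ P | m ≤ #{p ∈ P | f i q < f i p}} ∪ {q ∈ P | m ≤ #{p ∈ P | f i p < f i q}}
  have hbad (i : ι) : #(bad i) ≤ 2 * (#P - m) := by
    have habove := card_filter_le_card_filter_lt_le P (f i) m
    have hbelow := card_filter_le_card_filter_lt_le P (OrderDual.toDual ∘ f i) m
    simp only [Function.comp_apply, OrderDual.toDual_lt_toDual] at hbelow
    exact (Finset.card_union_le _ _).trans (by lia)
  have hcard : #(Finset.univ.biUnion bad) < #P := calc
    #(Finset.univ.biUnion bad) ≤ Fintype.card ι * (2 * (#P - m)) :=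
      Finset.card_biUnion_le_card_mul _ _ _ fun i _ => hbad i
    _ = 2 * Fintype.card ι * (#P - m) := by ring
    _ < #P := hm
  obtain ⟨q, hqP, hq⟩ := Finset.exists_mem_notMem_of_card_lt_card hcard
  refine ⟨q, hqP, fun i => ?_⟩
  simpa [bad, hqP] using fun h => hq (Finset.mem_biUnion.2 ⟨i, Finset.mem_univ i, h⟩)

end Order

section BudgetSplit

theorem mul_le_mul_div_add_mul_or {v w a b n : ℝ} (hv : 0 ≤ v) (hw : 0 ≤ w) (hab : a + b ≤ n) :
    w * a ≤ v * w / (v + w) * n ∨ v * b ≤ v * w / (v + w) * n := by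
  obtain rfl | hv := hv.eq_or_lt
  · simp
  obtain rfl | hw := hw.eq_or_lt
  · simp
  have hweighted : v * (w * a) + w * (v * b) ≤ (v + w) * (v * w / (v + w) * n) := calc
    v * (w * a) + w * (v * b) = v * w * (a + b) := by ring
    _ ≤ v * w * n := by gcongr
    _ = (v + w) * (v * w / (v + w) * n) := by field_simp
  by_contra! hcon
  linarith [mul_lt_mul_of_pos_left hcon.1 hv, mul_lt_mul_of_pos_left hcon.2 hw]

theorem exists_budget_split {ε : ℕ → ℝ} (hε : ∀ i, 0 ≤ ε i) {x y z : ℕ} (hz : 2 * z ≤ x + y)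
    {c t : ℝ} (hx : c * ε x ≤ t) (hyz : ε y * ε z / (ε y + ε z) ≤ t)
    {a b n : ℝ} (hn : 0 ≤ n) (ha : a ≤ c * n) (hb : b ≤ c * n) (hab : a + b ≤ n) :
    ∃ i j, i + j ≤ x + y ∧ ε i * a ≤ t * n ∧ ε j * b ≤ t * n := by
  wlog hba : b ≤ a generalizing a b
  · obtain ⟨i, j, hij, hi, hj⟩ := this hb ha (by linarith) (by linarith)
    exact ⟨j, i, by lia, hj, hi⟩
  have hyzn := mul_le_mul_of_nonneg_right hyz hn
  obtain hza | hyb := mul_le_mul_div_add_mul_or (hε y) (hε z) hab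
  · exact ⟨z, z, by lia, hza.trans hyzn,
      (mul_le_mul_of_nonneg_left hba (hε z)).trans (hza.trans hyzn)⟩
  · have hxa : ε x * a ≤ t * n := calc
      ε x * a ≤ ε x * (c * n) := mul_le_mul_of_nonneg_left ha (hε x)
      _ = c * ε x * n := by ring
      _ ≤ t * n := mul_le_mul_of_nonneg_right hx hn
    exact ⟨x, y, le_rfl, hxa, hyb.trans hyzn⟩

end BudgetSplit

variable {P Q Q' A B : Finset (EuclideanSpace ℝ (Fin 2))} {R : Set (EuclideanSpace ℝ (Fin 2))}

section RectNet

theorem isRectNet_one (h : Q ⊆ P) : IsRectNet P Q 1 := by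
  refine ⟨h, fun R _ hR => absurd hR (not_lt.2 ?_)⟩
  have hle : (R ∩ ↑P).ncard ≤ #P :=
    (Set.ncard_inter_le_ncard_right R ↑P).trans_eq (Set.ncard_coe_finset P)
  simpa using hle

theorem isRectNet_empty (ε : ℝ) : IsRectNet ∅ ∅ ε :=
  ⟨Finset.Subset.rfl, fun R _ hR => by simp at hR⟩

theorem IsRectNet.mono {ε δ : ℝ} (h : IsRectNet P Q ε) (hεδ : ε ≤ δ) : IsRectNet P Q δ :=
  ⟨h.1, fun R hR hheavy => h.2 R hR (lt_of_le_of_lt (by gcongr) hheavy)⟩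

theorem IsRectNet.of_mul_card_lt_floor_add_one {ε δ : ℝ} (h : IsRectNet P Q δ) (hε : 0 ≤ ε)
    (hδ : δ * #P < ⌊ε * #P⌋₊ + 1) : IsRectNet P Q ε := by
  refine ⟨h.1, fun R hR hheavy => h.2 R hR (hδ.trans_le ?_)⟩
  exact_mod_cast (Nat.floor_lt (by positivity)).2 hheavy

theorem epsR_nonneg (i : ℕ) : 0 ≤ epsR i :=
  Real.sInf_nonneg fun _ h => h.1.1

theorem exists_isRectNet_of_epsR_lt {i : ℕ} {ε : ℝ} (h : epsR i < ε)
    (P : Finset (EuclideanSpace ℝ (Fin 2))) : ∃ Q, #Q ≤ i ∧ IsRectNet P Q ε := by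
  obtain ⟨δ, hδ, hδε⟩ := exists_lt_of_csInf_lt
    (by exact ⟨1, by simp, fun P => ⟨∅, by simp, isRectNet_one P.empty_subset⟩⟩) h
  obtain ⟨Q, hcard, hnet⟩ := hδ.2 P
  exact ⟨Q, hcard, hnet.mono hδε.le⟩

theorem epsR_le {i : ℕ} {ε : ℝ} (hε : 0 ≤ ε) (h : ∀ P, ∃ Q, #Q ≤ i ∧ IsRectNet P Q ε) :
    epsR i ≤ ε := by
  have hmin : epsR i ≤ min ε 1 := by
    refine csInf_le ⟨0, fun _ h => h.1.1⟩ ⟨⟨by positivity, min_le_right _ _⟩, fun P => ?_⟩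
    obtain hε1 | hε1 := min_choice ε 1 <;> rw [hε1]
    · exact h P
    · exact ⟨∅, by simp, isRectNet_one P.empty_subset⟩
  exact hmin.trans (min_le_left _ _)

-- Intersection sizes are integers, so all `ε` slightly above `epsR i` impose the same condition
-- on nets of the fixed set `P` as `epsR i` does.
theorem exists_isRectNet_epsR (i : ℕ) (P : Finset (EuclideanSpace ℝ (Fin 2))) :
    ∃ Q, #Q ≤ i ∧ IsRectNet P Q (epsR i) := by
  obtain rfl | hne := P.eq_empty_or_nonempty
  · exact ⟨∅, by simp, isRectNet_empty _⟩
  have hn : (0 : ℝ) < #P := by exact_mod_cast hne.card_pos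
  have hlt : epsR i < (⌊epsR i * #P⌋₊ + 1) / #P := by
    rw [lt_div_iff₀ hn]
    exact Nat.lt_floor_add_one _
  obtain ⟨ε, hε, hεlt⟩ := exists_between hlt
  obtain ⟨Q, hcard, hnet⟩ := exists_isRectNet_of_epsR_lt hε P
  exact ⟨Q, hcard, hnet.of_mul_card_lt_floor_add_one (epsR_nonneg i) ((lt_div_iff₀ hn).1 hεlt)⟩

end RectNet

theorem IsRect.exists_forall_lt_or_forall_gt (hR : IsRect R) {q : EuclideanSpace ℝ (Fin 2)}
    (hq : q ∉ R) : ∃ i, (∀ p ∈ R, q i < p i) ∨ (∀ p ∈ R, p i < q i) := by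
  obtain ⟨a, b, c, d, rfl⟩ := hR
  simp only [Set.mem_ofPred_eq, not_and_or, not_le] at hq
  obtain ha | hb | hc | hd := hq
  · exact ⟨0, .inl fun p hp => ha.trans_le hp.1⟩
  · exact ⟨0, .inr fun p hp => hp.2.1.trans_lt hb⟩
  · exact ⟨1, .inl fun p hp => hc.trans_le hp.2.2.1⟩
  · exact ⟨1, .inr fun p hp => hp.2.2.2.trans_lt hd⟩

/-- `Q` meets every axis-parallel rectangle that contains more than `s` points of `P` and whose
points of `P` all lie in `A`. The threshold `s` is an absolute number of points, so that nets of
different sets `A` can be compared. -/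
def HitsRectsWithin (P A Q : Finset (EuclideanSpace ℝ (Fin 2))) (s : ℝ) : Prop :=
  ∀ R : Set (EuclideanSpace ℝ (Fin 2)), IsRect R → R ∩ ↑P ⊆ ↑A →
    s < ((R ∩ ↑P).ncard : ℝ) → ∃ q ∈ Q, q ∈ R

theorem HitsRectsWithin.mono {s : ℝ} (h : HitsRectsWithin P A Q s) (hQ : Q ⊆ Q') :
    HitsRectsWithin P A Q' s := fun R hR hRA hs =>
  let ⟨q, hq, hqR⟩ := h R hR hRA hs
  ⟨q, hQ hq, hqR⟩

theorem IsRectNet.hitsRectsWithin {ε s : ℝ} (h : IsRectNet A Q ε) (hs : ε * #A ≤ s)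
    (P : Finset (EuclideanSpace ℝ (Fin 2))) : HitsRectsWithin P A Q s := by
  intro R hR hRA hheavy
  have hle : (R ∩ ↑P).ncard ≤ (R ∩ ↑A).ncard :=
    Set.ncard_le_ncard (Set.subset_inter Set.inter_subset_left hRA)
      (A.finite_toSet.inter_of_right R)
  exact h.2 R hR (hs.trans_lt (hheavy.trans_le (by exact_mod_cast hle)))

theorem exists_hitsRectsWithin_pair {i j : ℕ} {s : ℝ} (hA : A ⊆ P) (hB : B ⊆ P)
    (hi : epsR i * #A ≤ s) (hj : epsR j * #B ≤ s) :
    ∃ Q ⊆ P, #Q ≤ i + j ∧ HitsRectsWithin P A Q s ∧ HitsRectsWithin P B Q s := by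
  classical
  obtain ⟨QA, hcardA, hnetA⟩ := exists_isRectNet_epsR i A
  obtain ⟨QB, hcardB, hnetB⟩ := exists_isRectNet_epsR j B
  exact ⟨QA ∪ QB, Finset.union_subset (hnetA.1.trans hA) (hnetB.1.trans hB),
    (Finset.card_union_le _ _).trans (add_le_add hcardA hcardB),
    (hnetA.hitsRectsWithin hi P).mono Finset.subset_union_left,
    (hnetB.hitsRectsWithin hj P).mono Finset.subset_union_right⟩

theorem exists_hitsRectsWithin_of_disjoint {x y z : ℕ} (hz : 2 * z ≤ x + y) {c t : ℝ}
    (hx : c * epsR x ≤ t) (hyz : epsR y * epsR z / (epsR y + epsR z) ≤ t)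
    (hA : A ⊆ P) (hB : B ⊆ P) (hAB : Disjoint A B)
    (hcardA : (#A : ℝ) ≤ c * #P) (hcardB : (#B : ℝ) ≤ c * #P) :
    ∃ Q ⊆ P, #Q ≤ x + y ∧
      HitsRectsWithin P A Q (t * #P) ∧ HitsRectsWithin P B Q (t * #P) := by
  classical
  have hcard : #A + #B ≤ #P := by
    rw [← Finset.card_union_of_disjoint hAB]
    exact Finset.card_le_card (Finset.union_subset hA hB)
  obtain ⟨i, j, hij, hi, hj⟩ := exists_budget_split epsR_nonneg hz hx hyz
    (Nat.cast_nonneg #P) hcardA hcardB (by exact_mod_cast hcard)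
  obtain ⟨Q, hQP, hQ, hits⟩ := exists_hitsRectsWithin_pair hA hB hi hj
  exact ⟨Q, hQP, hQ.trans hij, hits⟩

theorem exists_forall_card_openHalfPlane_le (hP : P.Nonempty) :
    ∃ q ∈ P, ∀ i, (#{p ∈ P | q i < p i} : ℝ) ≤ 3 / 4 * #P ∧
      (#{p ∈ P | p i < q i} : ℝ) ≤ 3 / 4 * #P := by
  have hpos := hP.card_pos
  have hm : 2 * Fintype.card (Fin 2) * (#P - (3 * #P / 4 + 1)) < #P := by
    rw [Fintype.card_fin]
    lia
  obtain ⟨q, hqP, hq⟩ := exists_forall_card_filter_lt_and_gt_lt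
    (fun i (p : EuclideanSpace ℝ (Fin 2)) => p i) hm
  have hcast {k : ℕ} (hk : k < 3 * #P / 4 + 1) : (k : ℝ) ≤ 3 / 4 * #P := by
    have h4 : (4 * k : ℝ) ≤ 3 * #P := by exact_mod_cast (by lia : 4 * k ≤ 3 * #P)
    linarith
  exact ⟨q, hqP, fun i => ⟨hcast (hq i).1, hcast (hq i).2⟩⟩

theorem isRectNet_insert [DecidableEq (EuclideanSpace ℝ (Fin 2))] {q : EuclideanSpace ℝ (Fin 2)}
    {ε : ℝ} (hq : q ∈ P) (hQ : Q ⊆ P)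
    (hits : ∀ i, HitsRectsWithin P {p ∈ P | q i < p i} Q (ε * #P) ∧
      HitsRectsWithin P {p ∈ P | p i < q i} Q (ε * #P)) :
    IsRectNet P (insert q Q) ε := by
  refine ⟨Finset.insert_subset hq hQ, fun R hR hheavy => ?_⟩
  by_cases hqR : q ∈ R
  · exact ⟨q, Finset.mem_insert_self q Q, hqR⟩
  obtain ⟨i, habove | hbelow⟩ := hR.exists_forall_lt_or_forall_gt hqR
  · exact ((hits i).1.mono (Finset.subset_insert q Q)) R hR
      (fun p hp => by simpa using ⟨hp.2, habove p hp.1⟩) hheavy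
  · exact ((hits i).2.mono (Finset.subset_insert q Q)) R hR
      (fun p hp => by simpa using ⟨hp.2, hbelow p hp.1⟩) hheavy

theorem exists_isRectNet_of_le {x y z : ℕ} (hz : 2 * z ≤ x + y) {t : ℝ}
    (hx : 3 / 4 * epsR x ≤ t) (hyz : epsR y * epsR z / (epsR y + epsR z) ≤ t)
    (P : Finset (EuclideanSpace ℝ (Fin 2))) :
    ∃ Q, #Q ≤ 2 * (x + y) + 1 ∧ IsRectNet P Q t := by
  classical
  obtain rfl | hP := P.eq_empty_or_nonempty
  · exact ⟨∅, by simp, isRectNet_empty t⟩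
  obtain ⟨q, hqP, hq⟩ := exists_forall_card_openHalfPlane_le hP
  have hdisj (i : Fin 2) : Disjoint {p ∈ P | q i < p i} {p ∈ P | p i < q i} :=
    Finset.disjoint_filter.2 fun _ _ => lt_asymm
  choose Q hQP hcard hits using fun i => exists_hitsRectsWithin_of_disjoint hz hx hyz
    (Finset.filter_subset _ P) (Finset.filter_subset _ P) (hdisj i) (hq i).1 (hq i).2
  have hQ (i : Fin 2) : Q i ⊆ Finset.univ.biUnion Q :=
    Finset.subset_biUnion_of_mem Q (Finset.mem_univ i)
  refine ⟨insert q (Finset.univ.biUnion Q), ?_, isRectNet_insert hqP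
    (Finset.biUnion_subset.2 fun i _ => hQP i)
    fun i => ⟨(hits i).1.mono (hQ i), (hits i).2.mono (hQ i)⟩⟩
  have hunion : #(Finset.univ.biUnion Q) ≤ 2 * (x + y) :=
    Finset.card_biUnion_le_card_mul _ _ _ fun i _ => hcard i
  exact (Finset.card_insert_le _ _).trans (Nat.add_le_add_right hunion 1)

theorem epsR_recursive_one_point_general {x y z : ℕ} (hz : 2 * z ≤ x + y) :
    epsR (2 * (x + y) + 1) ≤
      max (3 / 4 * epsR x) (epsR y * epsR z / (epsR y + epsR z)) :=
  epsR_le (le_max_of_le_left (mul_nonneg (by norm_num) (epsR_nonneg x)))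
    (exists_isRectNet_of_le hz (le_max_left _ _) (le_max_right _ _))

/-- Recursive upper bound:
`ε_{2(x+y)+1}^R ≤ max((3/4)ε_x^R, ε_y^R ε_z^R/(ε_y^R + ε_z^R))` with `z = ⌊(x+y)/2⌋`. -/
theorem epsR_recursive_one_point (x y : ℕ) (hxy : y ≤ x) :
    epsR (2 * (x + y) + 1) ≤
      max ((3 / 4) * epsR x)
        ((epsR y * epsR ((x + y) / 2)) / (epsR y + epsR ((x + y) / 2))) :=
  epsR_recursive_one_point_general (Nat.mul_div_le (x + y) 2)
end

section
/- For all integers x, y ≥ 2 and j, k ≥ 0, the quantities ε_i^R satisfy ε_{2(x−2)(y−1)+jx+ky}^R ≤ max( 2·ε_j^R / x , ε_k^R / y ). -/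
/-!
Blow up every point of `P` into `x * y` copies in general position and cut the result into `x`
vertical and `y` horizontal slabs with equally many points. Place a net of size `j` in each vertical
slab, a net of size `k` in each horizontal slab, and, at each crossing of one of the `x - 2` inner
vertical slabs with one of the `y - 1` horizontal dividing lines, the two points of the slab nearest
to the line. A box with more than `ε n` of the `n` points that misses the slab nets has few points
in each slab, so it meets at least three vertical slabs, one of which lies entirely over its first
side, and at least two horizontal ones, hence crosses a dividing line. In that vertical slab it has
a point, and therefore also one of the two points nearest to the line.
-/

/-- `ε` is admissible for nets of size `i`: every finite planar point set has an `ε`-net with at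
most `i` points. Unlike in the definition of `epsR`, `ε` ranges over all reals. -/
def AdmitsRectNets (i : ℕ) (ε : ℝ) : Prop :=
  ∀ P : Finset (EuclideanSpace ℝ (Fin 2)),
    ∃ Q : Finset (EuclideanSpace ℝ (Fin 2)), Q.card ≤ i ∧ IsRectNet P Q ε

namespace AdmitsRectNets

lemma one (i : ℕ) : AdmitsRectNets i 1 := by
  refine fun P => ⟨∅, by simp, by simp, fun R _ hR => absurd hR ?_⟩
  have hle := Set.ncard_le_ncard (Set.inter_subset_right : R ∩ ↑P ⊆ ↑P) P.finite_toSet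
  rw [Set.ncard_coe_finset] at hle
  simpa using hle

lemma nonneg {i : ℕ} {ε : ℝ} (h : AdmitsRectNets i ε) : 0 ≤ ε := by
  by_contra! hε
  obtain ⟨Q, -, -, hQ⟩ := h {0}
  obtain ⟨q, -, h₁, h₂, -⟩ := hQ {x | 1 ≤ x 0 ∧ x 0 ≤ 0 ∧ 0 ≤ x 1 ∧ x 1 ≤ 0} ⟨1, 0, 0, 0, rfl⟩ (by
    rw [Finset.card_singleton, Nat.cast_one, mul_one]
    exact hε.trans_le (Nat.cast_nonneg _))
  linarith

lemma mono {i : ℕ} {ε δ : ℝ} (h : AdmitsRectNets i ε) (hεδ : ε ≤ δ) : AdmitsRectNets i δ := by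
  intro P
  obtain ⟨Q, hcard, hQP, hQ⟩ := h P
  refine ⟨Q, hcard, hQP, fun R hR hlt => hQ R hR (lt_of_le_of_lt ?_ hlt)⟩
  gcongr

lemma epsR_le {i : ℕ} {ε : ℝ} (h : AdmitsRectNets i ε) : epsR i ≤ ε := by
  have hbdd : BddBelow {ε : ℝ | ε ∈ Set.Icc (0 : ℝ) 1 ∧ AdmitsRectNets i ε} :=
    ⟨0, fun _ hδ => hδ.1.1⟩
  rcases le_total ε 1 with hε | hε
  · exact csInf_le hbdd ⟨⟨h.nonneg, hε⟩, h⟩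
  · exact (csInf_le hbdd ⟨⟨zero_le_one, le_rfl⟩, one i⟩).trans hε

lemma of_epsR_lt {i : ℕ} {ε : ℝ} (h : epsR i < ε) : AdmitsRectNets i ε := by
  have hne : {ε : ℝ | ε ∈ Set.Icc (0 : ℝ) 1 ∧ AdmitsRectNets i ε}.Nonempty :=
    ⟨1, ⟨zero_le_one, le_rfl⟩, one i⟩
  obtain ⟨δ, ⟨-, hδ⟩, hδε⟩ := exists_lt_of_csInf_lt hne h
  exact mono hδ hδε.le

end AdmitsRectNets

section LinearOrder

variable {α : Type*} [LinearOrder α]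

/-- The number of elements of `T` below `a`: this turns a finite chain into an initial segment
of `ℕ`, compatibly with the order of the ambient type. -/
def rankIn (T : Finset α) (a : α) : ℕ := (T.filter (· < a)).card

lemma rankIn_mono (T : Finset α) : Monotone (rankIn T) := fun _ _ hab =>
  Finset.card_le_card (Finset.monotone_filter_right T fun _ _ hta => hta.trans_le hab)

lemma rankIn_strictMonoOn (T : Finset α) : StrictMonoOn (rankIn T) T := by
  intro a ha b _ hab
  refine Finset.card_lt_card (Finset.ssubset_iff_of_subset ?_ |>.mpr ⟨a, ?_, ?_⟩)
  · exact Finset.monotone_filter_right T fun _ _ hta => hta.trans hab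
  · exact Finset.mem_filter.mpr ⟨ha, hab⟩
  · simp only [Finset.mem_filter, lt_self_iff_false, and_false, not_false_eq_true]

lemma rankIn_lt_card {T : Finset α} {a : α} (ha : a ∈ T) : rankIn T a < T.card :=
  Finset.card_lt_card (Finset.filter_ssubset.mpr ⟨a, ha, lt_irrefl a⟩)

lemma exists_strictMonoOn_real (T : Finset α) : ∃ r : α → ℝ, StrictMonoOn r T :=
  ⟨_, Nat.strictMono_cast.comp_strictMonoOn (rankIn_strictMonoOn T)⟩

lemma exists_mem_iff_mem_Icc {β : Type*} [LinearOrder β] [Nontrivial β] {T : Finset α} {r : α → β}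
    (hr : StrictMonoOn r T) {A : Set α} (hA : A.OrdConnected) :
    ∃ a b, ∀ t ∈ T, t ∈ A ↔ r t ∈ Set.Icc a b := by
  classical
  rcases (T.filter (· ∈ A)).eq_empty_or_nonempty with hempty | hne
  · obtain ⟨b, a, hba⟩ := exists_pair_lt β
    refine ⟨a, b, fun t ht => iff_of_false (fun htA => ?_) fun h => ?_⟩
    · exact Finset.filter_eq_empty_iff.mp hempty ht htA
    · exact (hba.trans_le (h.1.trans h.2)).false
  · obtain ⟨m, hm, hmin⟩ := Finset.exists_min_image _ id hne
    obtain ⟨M, hM, hmax⟩ := Finset.exists_max_image _ id hne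
    simp only [Finset.mem_filter, id_eq, and_imp] at hm hM hmin hmax
    refine ⟨r m, r M, fun t ht => ⟨fun htA => ?_, fun h => ?_⟩⟩
    · exact ⟨hr.monotoneOn hm.1 ht (hmin t ht htA), hr.monotoneOn ht hM.1 (hmax t ht htA)⟩
    · exact hA.out hm.2 hM.2 ⟨(hr.le_iff_le hm.1 ht).mp h.1, (hr.le_iff_le ht hM.1).mp h.2⟩

lemma exists_monotone_card_fiber_le {T : Finset α} {q w : ℕ} (hT : T.card ≤ q * w) :
    ∃ φ : α → ℕ, Monotone φ ∧ (∀ t ∈ T, φ t < q) ∧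
      ∀ s, (T.filter (φ · = s)).card ≤ w := by
  refine ⟨fun a => rankIn T a / w, fun a b hab => Nat.div_le_div_right (rankIn_mono T hab),
    fun t ht => Nat.div_lt_of_lt_mul ?_, fun s => ?_⟩
  · exact (rankIn_lt_card ht).trans_le (hT.trans_eq (mul_comm q w))
  rcases w.eq_zero_or_pos with rfl | hw
  · exact (Finset.card_filter_le T _).trans hT
  calc (T.filter (rankIn T · / w = s)).card
      ≤ (Finset.Ico (s * w) ((s + 1) * w)).card := by
        refine Finset.card_le_card_of_injOn (rankIn T) (fun t ht => ?_)
          ((rankIn_strictMonoOn T).injOn.mono (Finset.filter_subset _ T))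
        obtain ⟨-, rfl⟩ := Finset.mem_filter.mp ht
        exact Finset.mem_coe.mpr (Finset.mem_Ico.mpr
          ⟨Nat.div_mul_le_self _ _, (Nat.div_lt_iff_lt_mul hw).mp (Nat.lt_succ_self _)⟩)
    _ = w := by rw [Nat.card_Ico, add_one_mul, Nat.add_sub_cancel_left]

lemma exists_monotone_comp_card_fiber_le {ι : Type*} {S : Finset ι} {f : ι → α}
    (hf : Set.InjOn f S) {q w : ℕ} (hS : S.card ≤ q * w) :
    ∃ φ : α → ℕ, Monotone φ ∧ (∀ p ∈ S, φ (f p) < q) ∧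
      ∀ s, (S.filter (fun p => φ (f p) = s)).card ≤ w := by
  obtain ⟨φ, hφ, hφq, hφw⟩ :=
    exists_monotone_card_fiber_le ((Finset.card_image_of_injOn hf).trans_le hS)
  refine ⟨φ, hφ, fun p hp => hφq _ (Finset.mem_image_of_mem f hp), fun s => ?_⟩
  have hfs := hφw s
  rwa [Finset.filter_image, Finset.card_image_of_injOn
    (hf.mono (Finset.filter_subset _ S))] at hfs

lemma exists_card_le_one_forall_exists_le {ι : Type*} (S : Finset ι) (g : ι → α) :
    ∃ W ⊆ S, W.card ≤ 1 ∧ ∀ p ∈ S, ∃ q ∈ W, g q ≤ g p := by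
  rcases S.eq_empty_or_nonempty with rfl | hS
  · exact ⟨∅, by simp⟩
  · obtain ⟨m, hm, hmin⟩ := S.exists_min_image g hS
    exact ⟨{m}, by simpa using hm, by simp, fun p hp => ⟨m, by simp, hmin p hp⟩⟩

/- The two points are those of `S` closest to the cut `L` on either side. -/
lemma exists_card_le_two_forall_mem_ordConnected {ι : Type*} (S : Finset ι) (g : ι → α) {L : Set α}
    (hL : IsLowerSet L) :
    ∃ W ⊆ S, W.card ≤ 2 ∧ ∀ B : Set α, B.OrdConnected → (B ∩ L).Nonempty → (B \ L).Nonempty →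
      (∃ p ∈ S, g p ∈ B) → ∃ q ∈ W, g q ∈ B := by
  classical
  obtain ⟨W₁, hW₁S, hW₁card, hW₁⟩ :=
    exists_card_le_one_forall_exists_le (S.filter (g · ∈ L)) (OrderDual.toDual ∘ g)
  obtain ⟨W₂, hW₂S, hW₂card, hW₂⟩ := exists_card_le_one_forall_exists_le (S.filter (g · ∉ L)) g
  refine ⟨W₁ ∪ W₂, Finset.union_subset (hW₁S.trans (Finset.filter_subset _ _))
    (hW₂S.trans (Finset.filter_subset _ _)), (Finset.card_union_le _ _).trans (by omega), ?_⟩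
  rintro B hB ⟨u, huB, huL⟩ ⟨v, hvB, hvL⟩ ⟨p, hpS, hpB⟩
  have below_le_above {b c : α} (hb : b ∈ L) (hc : c ∉ L) : b ≤ c :=
    le_of_not_ge fun hcb => hc (hL hcb hb)
  by_cases hpL : g p ∈ L
  · obtain ⟨q, hqW, hpq⟩ := hW₁ p (Finset.mem_filter.mpr ⟨hpS, hpL⟩)
    have hqL := (Finset.mem_filter.mp (hW₁S hqW)).2
    exact ⟨q, Finset.mem_union_left _ hqW, hB.out hpB hvB ⟨hpq, below_le_above hqL hvL⟩⟩
  · obtain ⟨q, hqW, hqp⟩ := hW₂ p (Finset.mem_filter.mpr ⟨hpS, hpL⟩)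
    have hqL := (Finset.mem_filter.mp (hW₂S hqW)).2
    exact ⟨q, Finset.mem_union_right _ hqW, hB.out huB hpB ⟨below_le_above huL hqL, hqp⟩⟩

variable {ι : Type*} {U : Finset ι} {φ : ι → α} {c : ℝ}

lemma exists_lt_of_card_fiber_le (hU : U.Nonempty)
    (hfiber : ∀ s, ((U.filter (φ · = s)).card : ℝ) ≤ c) (hcard : c < U.card) :
    ∃ u ∈ U, ∃ v ∈ U, φ u < φ v := by
  by_contra! hconst
  obtain ⟨p, hp⟩ := hU
  have hUp : U.filter (φ · = φ p) = U :=
    Finset.filter_eq_self.mpr fun u hu => le_antisymm (hconst p hp u hu) (hconst u hu p hp)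
  exact (hcard.trans_le (hUp ▸ hfiber (φ p))).false

lemma exists_lt_lt_of_card_fiber_le (hU : U.Nonempty)
    (hfiber : ∀ s, ((U.filter (φ · = s)).card : ℝ) ≤ c) (hcard : 2 * c < U.card) :
    ∃ a ∈ U, ∃ p ∈ U, ∃ b ∈ U, φ a < φ p ∧ φ p < φ b := by
  classical
  obtain ⟨a, ha, hmin⟩ := U.exists_min_image φ hU
  obtain ⟨b, hb, hmax⟩ := U.exists_max_image φ hU
  by_contra! hbetween
  have hcover : U ⊆ U.filter (φ · = φ a) ∪ U.filter (φ · = φ b) := by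
    intro p hp
    simp only [Finset.mem_union, Finset.mem_filter, hp, true_and]
    exact (hmin p hp).eq_or_lt.imp Eq.symm fun h =>
      le_antisymm (hmax p hp) (hbetween a ha p hp b hb h)
  have hle : (U.card : ℝ) ≤ (U.filter (φ · = φ a)).card + (U.filter (φ · = φ b)).card :=
    mod_cast (Finset.card_le_card hcover).trans (Finset.card_union_le _ _)
  linarith [hfiber (φ a), hfiber (φ b)]

end LinearOrder

section BoxNet

variable {α β : Type*} [LinearOrder α] [LinearOrder β]

open scoped Classical in
/-- The analogue of `IsRectNet` for finite sets in a product of two linear orders, where the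
rectangles are the products of two order-convex sets. -/
def IsBoxNet (P Q : Finset (α × β)) (ε : ℝ) : Prop :=
  Q ⊆ P ∧ ∀ (A : Set α) (B : Set β), A.OrdConnected → B.OrdConnected →
    ε * P.card < (P.filter (· ∈ A ×ˢ B)).card → ∃ q ∈ Q, q ∈ A ×ˢ B

theorem AdmitsRectNets.exists_isBoxNet {i : ℕ} {ε : ℝ} (h : AdmitsRectNets i ε)
    (P : Finset (α × β)) : ∃ Q : Finset (α × β), Q.card ≤ i ∧ IsBoxNet P Q ε := by
  classical
  obtain ⟨r₁, hr₁⟩ := exists_strictMonoOn_real (P.image Prod.fst)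
  obtain ⟨r₂, hr₂⟩ := exists_strictMonoOn_real (P.image Prod.snd)
  have hfst : ∀ z ∈ P, z.1 ∈ P.image Prod.fst := fun _ => Finset.mem_image_of_mem Prod.fst
  have hsnd : ∀ z ∈ P, z.2 ∈ P.image Prod.snd := fun _ => Finset.mem_image_of_mem Prod.snd
  let e : α × β → EuclideanSpace ℝ (Fin 2) := fun z => !₂[r₁ z.1, r₂ z.2]
  have he : Set.InjOn e P := by
    intro z hz z' hz' hzz'
    exact Prod.ext (hr₁.injOn (hfst z hz) (hfst z' hz') (congrArg (· 0) hzz'))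
      (hr₂.injOn (hsnd z hz) (hsnd z' hz') (congrArg (· 1) hzz'))
  obtain ⟨Q', hcard, hQ'P, hQ'⟩ := h (P.image e)
  obtain ⟨Q, hQP, rfl⟩ := Finset.subset_image_iff.mp hQ'P
  rw [Finset.card_image_of_injOn (he.mono hQP)] at hcard
  refine ⟨Q, hcard, hQP, fun A B hA hB hlt => ?_⟩
  obtain ⟨a, b, hab⟩ := exists_mem_iff_mem_Icc hr₁ hA
  obtain ⟨c, d, hcd⟩ := exists_mem_iff_mem_Icc hr₂ hB
  let R : Set (EuclideanSpace ℝ (Fin 2)) := {x | a ≤ x 0 ∧ x 0 ≤ b ∧ c ≤ x 1 ∧ x 1 ≤ d}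
  have mem_box_iff : ∀ z ∈ P, z ∈ A ×ˢ B ↔ e z ∈ R := fun z hz =>
    (and_congr (hab _ (hfst z hz)) (hcd _ (hsnd z hz))).trans and_assoc
  have inter_eq : R ∩ ↑(P.image e) = e '' ↑(P.filter (· ∈ A ×ˢ B)) := by
    rw [Finset.coe_image, Set.inter_comm, ← Set.image_inter_preimage, Finset.coe_filter]
    exact congrArg (e '' ·) (Set.ext fun z => and_congr_right fun hz => (mem_box_iff z hz).symm)
  obtain ⟨_, hq, hqR⟩ := hQ' R ⟨a, b, c, d, rfl⟩ (by
    rwa [inter_eq, (he.mono (Finset.filter_subset _ P)).ncard_image, Set.ncard_coe_finset,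
      Finset.card_image_of_injOn he])
  obtain ⟨q, hqQ, rfl⟩ := Finset.mem_image.mp hq
  exact ⟨q, hqQ, (mem_box_iff q (hQP hqQ)).mpr hqR⟩

open scoped Classical in
lemma AdmitsRectNets.exists_net_of_slabs {i q w : ℕ} {δ : ℝ} (h : AdmitsRectNets i δ)
    {P : Finset (α × β)} {σ : α × β → ℕ} (hσ : ∀ p ∈ P, σ p < q)
    (hslab : ∀ s, (P.filter (σ · = s)).card ≤ w) :
    ∃ Q ⊆ P, Q.card ≤ i * q ∧ ∀ (A : Set α) (B : Set β), A.OrdConnected → B.OrdConnected →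
      (∀ p ∈ Q, p ∉ A ×ˢ B) →
      ∀ s, (((P.filter (· ∈ A ×ˢ B)).filter (σ · = s)).card : ℝ) ≤ δ * w := by
  choose N hNcard hNsub hN using fun s => h.exists_isBoxNet (P.filter (σ · = s))
  refine ⟨(Finset.range q).biUnion N, Finset.biUnion_subset.mpr fun s _ =>
    (hNsub s).trans (Finset.filter_subset _ _), ?_, fun A B hA hB hmiss s => ?_⟩
  · exact (Finset.card_biUnion_le_card_mul _ N i fun s _ => hNcard s).trans_eq
      (by rw [Finset.card_range, mul_comm])
  have hδw : δ * ((P.filter (σ · = s)).card : ℝ) ≤ δ * w :=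
    mul_le_mul_of_nonneg_left (Nat.cast_le.mpr (hslab s)) h.nonneg
  rw [Finset.filter_comm]
  by_contra! hlt
  obtain ⟨p, hpN, hpbox⟩ := hN s A B hA hB (hδw.trans_lt hlt)
  obtain ⟨hpP, rfl⟩ := Finset.mem_filter.mp (hNsub s hpN)
  exact hmiss p (Finset.mem_biUnion.mpr ⟨σ p, Finset.mem_range.mpr (hσ p hpP), hpN⟩) hpbox

open scoped Classical in
/- A vertical slab `φ = s` strictly between two points of the box lies over the first side of the
box, so there the box is only constrained vertically; a horizontal line `ψ = t` that it crosses
then needs only the two points of the slab nearest to the line. -/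
lemma exists_crossing_net {x y : ℕ} {P : Finset (α × β)} {φ : α → ℕ} {ψ : β → ℕ}
    (hφ : Monotone φ) (hψ : Monotone ψ) (hφx : ∀ p ∈ P, φ p.1 < x) (hψy : ∀ p ∈ P, ψ p.2 < y) :
    ∃ Q ⊆ P, Q.card ≤ 2 * (x - 2) * (y - 1) ∧
      ∀ (A : Set α) (B : Set β), A.OrdConnected → B.OrdConnected →
        (∃ a ∈ P.filter (· ∈ A ×ˢ B), ∃ p ∈ P.filter (· ∈ A ×ˢ B),
          ∃ b ∈ P.filter (· ∈ A ×ˢ B), φ a.1 < φ p.1 ∧ φ p.1 < φ b.1) →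
        (∃ u ∈ P.filter (· ∈ A ×ˢ B), ∃ v ∈ P.filter (· ∈ A ×ˢ B), ψ u.2 < ψ v.2) →
        ∃ q ∈ Q, q ∈ A ×ˢ B := by
  choose W hWsub hWcard hW using fun st : ℕ × ℕ =>
    exists_card_le_two_forall_mem_ordConnected (P.filter (φ ·.1 = st.1)) Prod.snd
      ((isLowerSet_Iio st.2).preimage hψ)
  refine ⟨(Finset.Ioo 0 (x - 1) ×ˢ Finset.Ioo 0 y).biUnion W, Finset.biUnion_subset.mpr
    fun st _ => (hWsub st).trans (Finset.filter_subset _ _), ?_, ?_⟩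
  · refine (Finset.card_biUnion_le_card_mul _ W 2 fun st _ => hWcard st).trans_eq ?_
    rw [Finset.card_product, Nat.card_Ioo, Nat.card_Ioo, Nat.sub_zero, Nat.sub_zero, Nat.sub_sub]
    ring
  simp only [Finset.mem_filter]
  rintro A B hA hB ⟨a, ⟨-, haA, -⟩, p, ⟨hpP, -, hpB⟩, b, ⟨hbP, hbA, -⟩, hap, hpb⟩
    ⟨u, ⟨-, -, huB⟩, v, ⟨hvP, -, hvB⟩, huv⟩
  obtain ⟨q, hqW, hqB⟩ := hW (φ p.1, ψ v.2) B hB ⟨u.2, huB, huv⟩ ⟨v.2, hvB, lt_irrefl (ψ v.2)⟩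
    ⟨p, Finset.mem_filter.mpr ⟨hpP, rfl⟩, hpB⟩
  have hqp : φ q.1 = φ p.1 := (Finset.mem_filter.mp (hWsub _ hqW)).2
  have hqA : q.1 ∈ A := hA.out haA hbA
    ⟨(hφ.reflect_lt (hap.trans_eq hqp.symm)).le, (hφ.reflect_lt (hqp.trans_lt hpb)).le⟩
  refine ⟨q, Finset.mem_biUnion.mpr ⟨_, ?_, hqW⟩, hqA, hqB⟩
  have hbx := hφx b hbP
  have hvy := hψy v hvP
  simp only [Finset.mem_product, Finset.mem_Ioo]
  omega

theorem AdmitsRectNets.exists_isBoxNet_grid {x y j k w h : ℕ} {ε : ℝ}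
    (hj : AdmitsRectNets j (ε * x / 2)) (hk : AdmitsRectNets k (ε * y)) {P : Finset (α × β)}
    (hfst : Set.InjOn Prod.fst (P : Set (α × β))) (hsnd : Set.InjOn Prod.snd (P : Set (α × β)))
    (hw : P.card = x * w) (hh : P.card = y * h) :
    ∃ Q : Finset (α × β), Q.card ≤ 2 * (x - 2) * (y - 1) + j * x + k * y ∧ IsBoxNet P Q ε := by
  classical
  obtain ⟨φ, hφ, hφx, hφw⟩ := exists_monotone_comp_card_fiber_le hfst hw.le
  obtain ⟨ψ, hψ, hψy, hψh⟩ := exists_monotone_comp_card_fiber_le hsnd hh.le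
  obtain ⟨Q₀, hQ₀P, hQ₀card, hQ₀⟩ := exists_crossing_net hφ hψ hφx hψy
  obtain ⟨Q₁, hQ₁P, hQ₁card, hQ₁⟩ := hj.exists_net_of_slabs hφx hφw
  obtain ⟨Q₂, hQ₂P, hQ₂card, hQ₂⟩ := hk.exists_net_of_slabs hψy hψh
  refine ⟨Q₀ ∪ Q₁ ∪ Q₂, ?_, Finset.union_subset (Finset.union_subset hQ₀P hQ₁P) hQ₂P, ?_⟩
  · exact (Finset.card_union_le _ _).trans
      (add_le_add ((Finset.card_union_le _ _).trans (add_le_add hQ₀card hQ₁card)) hQ₂card)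
  intro A B hA hB hlt
  by_contra! hmiss
  simp only [Finset.mem_union, or_imp, forall_and] at hmiss
  obtain ⟨⟨hmiss₀, hmiss₁⟩, hmiss₂⟩ := hmiss
  have hcolumn := hQ₁ A B hA hB hmiss₁
  have hrow := hQ₂ A B hA hB hmiss₂
  have hlt₁ : 2 * (ε * x / 2 * w) < (P.filter (· ∈ A ×ˢ B)).card := by
    convert hlt using 1; rw [hw, Nat.cast_mul]; ring
  have hlt₂ : ε * y * h < (P.filter (· ∈ A ×ˢ B)).card := by
    convert hlt using 1; rw [hh, Nat.cast_mul]; ring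
  have hne : (P.filter (· ∈ A ×ˢ B)).Nonempty := by
    refine Finset.card_pos.mp (Nat.cast_pos.mp (lt_of_le_of_lt ?_ hlt₂))
    exact mul_nonneg hk.nonneg (Nat.cast_nonneg h)
  obtain ⟨q, hqQ, hqbox⟩ := hQ₀ A B hA hB (exists_lt_lt_of_card_fiber_le hne hcolumn hlt₁)
    (exists_lt_of_card_fiber_le hne hrow hlt₂)
  exact hmiss₀ q hqQ hqbox

end BoxNet

section BlowUp

/-- The chain in which the coordinates of the points of a blow-up live: a real coordinate followed
by two tie-breakers. -/
abbrev LexCoord := ℝ ×ₗ ℝ ×ₗ ℕ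

/-- The `t`-th copy of the point `p`, for `z = (p, t)`, as a point of a product of two chains. Each
coordinate of `p` is refined lexicographically by the other one and by `t`, so that distinct copies
differ in both coordinates. -/
def copyPoint (z : EuclideanSpace ℝ (Fin 2) × ℕ) : LexCoord × LexCoord :=
  (toLex (z.1 0, toLex (z.1 1, z.2)), toLex (z.1 1, toLex (z.1 0, z.2)))

/-- The planar point underlying a copy, a left inverse of `copyPoint` up to forgetting `t`. -/
def basePoint (u : LexCoord × LexCoord) : EuclideanSpace ℝ (Fin 2) :=
  !₂[(ofLex u.1).1, (ofLex u.2).1]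

lemma basePoint_copyPoint (z : EuclideanSpace ℝ (Fin 2) × ℕ) : basePoint (copyPoint z) = z.1 := by
  ext i; fin_cases i <;> rfl

lemma copyPoint_fst_injective : Function.Injective fun z => (copyPoint z).1 := by
  rintro ⟨p, t⟩ ⟨p', t'⟩ h
  simp only [copyPoint, EmbeddingLike.apply_eq_iff_eq, Prod.mk.injEq] at h
  refine Prod.ext (PiLp.ext fun i => ?_) h.2.2
  fin_cases i
  exacts [h.1, h.2.1]

lemma copyPoint_snd_injective : Function.Injective fun z => (copyPoint z).2 := by
  rintro ⟨p, t⟩ ⟨p', t'⟩ h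
  simp only [copyPoint, EmbeddingLike.apply_eq_iff_eq, Prod.mk.injEq] at h
  refine Prod.ext (PiLp.ext fun i => ?_) h.2.2
  fin_cases i
  exacts [h.2.1, h.1]

/-- The point set `P` with every point replaced by `m` copies, in general position: this makes the
number of points divisible by `m` and removes coincidences between coordinates. -/
def blowUp (P : Finset (EuclideanSpace ℝ (Fin 2))) (m : ℕ) : Finset (LexCoord × LexCoord) :=
  (P ×ˢ Finset.range m).map ⟨copyPoint, copyPoint_fst_injective.of_comp⟩

variable {P : Finset (EuclideanSpace ℝ (Fin 2))} {m : ℕ}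

lemma card_blowUp : (blowUp P m).card = P.card * m := by
  rw [blowUp, Finset.card_map, Finset.card_product, Finset.card_range]

lemma injOn_fst_blowUp : Set.InjOn Prod.fst (blowUp P m : Set (LexCoord × LexCoord)) := by
  rw [blowUp, Finset.coe_map]
  exact copyPoint_fst_injective.injOn.image_of_comp

lemma injOn_snd_blowUp : Set.InjOn Prod.snd (blowUp P m : Set (LexCoord × LexCoord)) := by
  rw [blowUp, Finset.coe_map]
  exact copyPoint_snd_injective.injOn.image_of_comp

open scoped Classical in
lemma IsBoxNet.isRectNet_image_basePoint {Q : Finset (LexCoord × LexCoord)} {ε : ℝ}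
    (hm : 0 < m) (hQ : IsBoxNet (blowUp P m) Q ε) : IsRectNet P (Q.image basePoint) ε := by
  obtain ⟨hQP, hQ⟩ := hQ
  refine ⟨Finset.image_subset_iff.mpr fun u hu => ?_, ?_⟩
  · obtain ⟨z, hz, rfl⟩ := Finset.mem_map.mp (hQP hu)
    exact (basePoint_copyPoint z).symm ▸ (Finset.mem_product.mp hz).1
  rintro R ⟨a, b, c, d, rfl⟩ hlt
  set R : Set (EuclideanSpace ℝ (Fin 2)) := {x | a ≤ x 0 ∧ x 0 ≤ b ∧ c ≤ x 1 ∧ x 1 ≤ d}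
  let A : Set LexCoord := (fun u => (ofLex u).1) ⁻¹' Set.Icc a b
  let B : Set LexCoord := (fun u => (ofLex u).1) ⁻¹' Set.Icc c d
  have mem_box_iff (u) : u ∈ A ×ˢ B ↔ basePoint u ∈ R := and_assoc
  have card_box : ((blowUp P m).filter (· ∈ A ×ˢ B)).card = (R ∩ ↑P).ncard * m := by
    have hRP : R ∩ ↑P = ↑(P.filter (· ∈ R)) := by rw [Finset.coe_filter, Set.inter_comm]; rfl
    simp only [hRP, Set.ncard_coe_finset, blowUp, Finset.filter_map, Finset.card_map,
      Function.comp_def, Function.Embedding.coeFn_mk, mem_box_iff, basePoint_copyPoint]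
    rw [Finset.filter_product_left (· ∈ R), Finset.card_product, Finset.card_range]
  obtain ⟨u, huQ, hu⟩ := hQ A B (Set.ordConnected_Icc.preimage_mono Prod.Lex.monotone_fst_ofLex)
    (Set.ordConnected_Icc.preimage_mono Prod.Lex.monotone_fst_ofLex) (by
      rw [card_box, card_blowUp, Nat.cast_mul, Nat.cast_mul, ← mul_assoc]
      exact mul_lt_mul_of_pos_right hlt (Nat.cast_pos.mpr hm))
  exact ⟨basePoint u, Finset.mem_image_of_mem _ huQ, (mem_box_iff u).mp hu⟩

end BlowUp

theorem AdmitsRectNets.grid {x y j k : ℕ} {ε : ℝ} (hx : 0 < x) (hy : 0 < y)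
    (hj : AdmitsRectNets j (ε * x / 2)) (hk : AdmitsRectNets k (ε * y)) :
    AdmitsRectNets (2 * (x - 2) * (y - 1) + j * x + k * y) ε := by
  classical
  intro P
  obtain ⟨Q, hQcard, hQ⟩ := hj.exists_isBoxNet_grid (P := blowUp P (x * y)) (w := P.card * y)
    (h := P.card * x) hk injOn_fst_blowUp injOn_snd_blowUp
    (by rw [card_blowUp]; ring) (by rw [card_blowUp]; ring)
  exact ⟨Q.image basePoint, Finset.card_image_le.trans hQcard,
    hQ.isRectNet_image_basePoint (Nat.mul_pos hx hy)⟩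

/-- Grid recursive upper bound:
`ε_{2(x-2)(y-1)+jx+ky}^R ≤ max(2 ε_j^R / x, ε_k^R / y)` for `x, y ≥ 2`, `j, k ≥ 0`. -/
theorem epsR_recursive_grid (x y j k : ℕ) (hx : 2 ≤ x) (hy : 2 ≤ y) :
    epsR (2 * (x - 2) * (y - 1) + j * x + k * y) ≤
      max (2 * epsR j / (x : ℝ)) (epsR k / (y : ℝ)) := by
  have hx₀ : 0 < x := zero_lt_two.trans_le hx
  have hy₀ : 0 < y := zero_lt_two.trans_le hy
  refine le_of_forall_gt_imp_ge_of_dense fun ε hε => ?_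
  obtain ⟨hjε, hkε⟩ := max_lt_iff.mp hε
  rw [div_lt_iff₀ (Nat.cast_pos.mpr hx₀)] at hjε
  rw [div_lt_iff₀ (Nat.cast_pos.mpr hy₀)] at hkε
  have hj : AdmitsRectNets j (ε * x / 2) := .of_epsR_lt (by linarith)
  have hk : AdmitsRectNets k (ε * y) := .of_epsR_lt hkε
  exact (hj.grid hx₀ hy₀ hk).epsR_le
end

section
/- For every finite set P of n points in ℝ², there exists a subset Q ⊆ P with |Q| ≤ 3 such that every axis-parallel rectangle R with |R ∩ P| > (9/16)·n contains a point of Q. In other words, every finite planar point set admits a strong (9/16)-net of size 3 with respect to axis-parallel rectangles. -/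
/-!
In dimension `d`, discarding fewer than `n/(2d)` extreme points in each of the `2d` axis directions
leaves at least one of the `n` points, `c`, and `c` has at most `(1 - 1/(2d)) n` points strictly on
either side of it in every coordinate. A box missing `c` lies strictly on one side of `c` in some
coordinate. For each coordinate, one of the two sides has at most `n/2` points and needs no
attention, as `1/2 ≤ (1 - 1/(2d))²` for `d ≥ 2`; the other has at most `(1 - 1/(2d)) n` points, and
adding such a centre of *those* points to the net limits the boxes on that side to `(1 - 1/(2d))²
n` points. So `c` and the `d` additional centres form the net.
-/

section StrongNet

open Finset

variable {X : Type*} {P Q : Finset X} {S : Set (Set X)} {B : Set X} {ε δ : ℝ}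

/-- `Q` is a strong `ε`-net of `P` with respect to the family `S`. The adjective "strong" refers to
the requirement that `Q` be a subset of `P`. -/
def IsStrongNet (ε : ℝ) (P : Finset X) (S : Set (Set X)) (Q : Finset X) : Prop :=
  Q ⊆ P ∧ ∀ B ∈ S, ε * #P < (B ∩ P).ncard → ∃ q ∈ Q, q ∈ B

lemma isStrongNet_empty : IsStrongNet ε ∅ S ∅ := by
  simp [IsStrongNet]

lemma ncard_inter_le_card_filter {p : X → Prop} [DecidablePred p] (hB : ∀ x ∈ B, p x) :
    (B ∩ P).ncard ≤ #{x ∈ P | p x} := by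
  rw [← Set.ncard_coe_finset]
  refine Set.ncard_le_ncard (fun x hx ↦ ?_) (finite_toSet _)
  exact mem_coe.2 (mem_filter.2 ⟨hx.2, hB x hx.1⟩)

lemma IsStrongNet.of_filter {p : X → Prop} [DecidablePred p]
    (hQ : IsStrongNet ε {x ∈ P | p x} S Q) (hε : 0 ≤ ε) (hp : #{x ∈ P | p x} ≤ δ * #P) :
    IsStrongNet (ε * δ) P {B ∈ S | ∀ x ∈ B, p x} Q := by
  refine ⟨hQ.1.trans (filter_subset _ _), fun B hB hheavy ↦ hQ.2 B hB.1 ?_⟩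
  have hinter : B ∩ P = B ∩ ({x ∈ P | p x} : Finset X) := by
    ext x
    simpa using fun hx _ ↦ hB.2 x hx
  calc ε * #{x ∈ P | p x} ≤ ε * (δ * #P) := mul_le_mul_of_nonneg_left hp hε
    _ = ε * δ * #P := (mul_assoc ..).symm
    _ < (B ∩ P).ncard := hheavy
    _ = (B ∩ ({x ∈ P | p x} : Finset X)).ncard := by rw [hinter]

lemma exists_isStrongNet_card_le_one_of_disjoint {p q : X → Prop} [DecidablePred p]
    [DecidablePred q] (hS : ∀ P' : Finset X, ∃ Q, #Q ≤ 1 ∧ IsStrongNet ε P' S Q) (hε : 0 ≤ ε)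
    (hεδ : 1 / 2 ≤ ε * δ) (hpq : Disjoint p q) (hp : #{x ∈ P | p x} ≤ δ * #P)
    (hq : #{x ∈ P | q x} ≤ δ * #P) :
    ∃ Q, #Q ≤ 1 ∧ IsStrongNet (ε * δ) P {B ∈ S | (∀ x ∈ B, p x) ∨ ∀ x ∈ B, q x} Q := by
  classical
  wlog hle : #{x ∈ P | p x} ≤ #{x ∈ P | q x} generalizing p q
  · simpa only [or_comm] using this hpq.symm hq hp (le_of_not_ge hle)
  have hsum : #{x ∈ P | p x} + #{x ∈ P | q x} ≤ #P := by
    rw [← card_union_of_disjoint (disjoint_filter_filter' _ _ hpq)]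
    exact card_le_card (union_subset (filter_subset _ _) (filter_subset _ _))
  have hhalf : (#{x ∈ P | p x} : ℝ) ≤ 1 / 2 * #P := by
    have : (2 * #{x ∈ P | p x} : ℝ) ≤ #P := by exact_mod_cast (by lia)
    linarith
  obtain ⟨Q, hcard, hQ⟩ := hS {x ∈ P | q x}
  have hQq := hQ.of_filter hε hq
  refine ⟨Q, hcard, hQq.1, fun B ⟨hBS, hB⟩ hheavy ↦ ?_⟩
  rcases hB with hBp | hBq
  · have hlight : ((B ∩ P).ncard : ℝ) ≤ ε * δ * #P := calc
      ((B ∩ P).ncard : ℝ) ≤ #{x ∈ P | p x} := mod_cast ncard_inter_le_card_filter hBp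
      _ ≤ 1 / 2 * #P := hhalf
      _ ≤ ε * δ * #P := by gcongr
    exact absurd hheavy hlight.not_gt
  · exact hQq.2 B ⟨hBS, hBq⟩ hheavy

end StrongNet

section Box

open Finset

variable {X ι : Type*} {α : ι → Type*} [∀ i, LinearOrder (α i)] {f : ∀ i, X → α i}
  {P : Finset X} {B : Set X} {c : X} {ε : ℝ}

/-- An axis-parallel box for the coordinate functions `f i`. The sides may be intervals of any
kind: open or closed, bounded or not. -/
def IsBox (f : ∀ i, X → α i) (B : Set X) : Prop :=
  ∃ I : ∀ i, Set (α i), (∀ i, (I i).OrdConnected) ∧ B = {x | ∀ i, f i x ∈ I i}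

lemma IsRect.isBox {R : Set (EuclideanSpace ℝ (Fin 2))} (hR : IsRect R) :
    IsBox (fun i (x : EuclideanSpace ℝ (Fin 2)) ↦ x i) R := by
  obtain ⟨a, b, c, d, rfl⟩ := hR
  refine ⟨![Set.Icc a b, Set.Icc c d], ?_, ?_⟩
  · simpa [Fin.forall_fin_two] using ⟨Set.ordConnected_Icc, Set.ordConnected_Icc⟩
  · simp [Fin.forall_fin_two, and_assoc]

lemma IsBox.exists_forall_lt_or_forall_gt (hB : IsBox f B) (hc : c ∉ B) :
    ∃ i, (∀ x ∈ B, f i x < f i c) ∨ ∀ x ∈ B, f i c < f i x := by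
  obtain ⟨I, hI, rfl⟩ := hB
  obtain ⟨i, hci⟩ := not_forall.1 hc
  refine ⟨i, ?_⟩
  by_contra! h
  obtain ⟨⟨x, hx, hcx⟩, y, hy, hyc⟩ := h
  exact hci ((hI i).out (hy i) (hx i) ⟨hyc, hcx⟩)

/-- `c` is an `ε`-centre of `P`: in each coordinate, at most a fraction `ε` of the points of `P` lie
strictly on either side of `c`. This is the analogue of a centrepoint for the axis-parallel
halfspaces. -/
def IsBoxCenter (ε : ℝ) (f : ∀ i, X → α i) (P : Finset X) (c : X) : Prop :=
  ∀ i, #{x ∈ P | f i x < f i c} ≤ ε * #P ∧ #{x ∈ P | f i c < f i x} ≤ ε * #P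

lemma card_filter_lt_card_filter_lt {β : Type*} [LinearOrder β] (g : X → β) (hP : P.Nonempty)
    (hε : ε < 1) :
    (#{c ∈ P | ε * #P < #{x ∈ P | g x < g c}} : ℝ) < (1 - ε) * #P := by
  rcases {c ∈ P | ε * #P < #{x ∈ P | g x < g c}}.eq_empty_or_nonempty with hempty | hne
  · rw [hempty, card_empty, Nat.cast_zero]
    exact mul_pos (sub_pos.2 hε) (mod_cast hP.card_pos)
  obtain ⟨p, hp, hmin⟩ := exists_min_image _ g hne
  have hle : #{c ∈ P | ε * #P < #{x ∈ P | g x < g c}} ≤ #{x ∈ P | ¬ g x < g p} :=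
    card_le_card fun c hc ↦ mem_filter.2 ⟨(mem_filter.1 hc).1, (hmin c hc).not_gt⟩
  have hsplit : (#{x ∈ P | g x < g p} + #{x ∈ P | ¬ g x < g p} : ℝ) = #P :=
    mod_cast card_filter_add_card_filter_not _
  have hlow : ε * #P < #{x ∈ P | g x < g p} := (mem_filter.1 hp).2
  rify at hle
  linarith

lemma exists_isBoxCenter [Fintype ι] [Nonempty ι] (f : ∀ i, X → α i) (hP : P.Nonempty) :
    ∃ c ∈ P, IsBoxCenter (1 - 1 / (2 * Fintype.card ι)) f P c := by
  classical
  set ε : ℝ := 1 - 1 / (2 * Fintype.card ι) with hε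
  have hε1 : ε < 1 := sub_lt_self 1 (by positivity)
  by_contra! hno
  set L : ι → Finset X := fun i ↦ {c ∈ P | ε * #P < #{x ∈ P | f i x < f i c}}
  set U : ι → Finset X := fun i ↦ {c ∈ P | ε * #P < #{x ∈ P | f i c < f i x}}
  have hcover : P ⊆ univ.biUnion fun i ↦ L i ∪ U i := by
    intro c hc
    obtain ⟨i, hi⟩ := not_forall.1 (hno c hc)
    rw [not_and_or, not_le, not_le] at hi
    refine mem_biUnion.2 ⟨i, mem_univ i, mem_union.2 ?_⟩
    exact hi.imp (fun h ↦ mem_filter.2 ⟨hc, h⟩) fun h ↦ mem_filter.2 ⟨hc, h⟩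
  have hL (i : ι) : (#(L i) : ℝ) < (1 - ε) * #P := card_filter_lt_card_filter_lt (f i) hP hε1
  have hU (i : ι) : (#(U i) : ℝ) < (1 - ε) * #P :=
    card_filter_lt_card_filter_lt (OrderDual.toDual ∘ f i) hP hε1
  have hlt : (#P : ℝ) < #P := calc
    (#P : ℝ) ≤ ∑ i, (#(L i) + #(U i) : ℝ) := mod_cast
      (card_le_card hcover).trans <| card_biUnion_le.trans <|
        sum_le_sum fun i _ ↦ card_union_le (L i) (U i)
    _ < ∑ _i : ι, ((1 - ε) * #P + (1 - ε) * #P) :=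
      sum_lt_sum_of_nonempty univ_nonempty fun i _ ↦ add_lt_add (hL i) (hU i)
    _ = #P := by
      rw [sum_const, card_univ, nsmul_eq_mul, hε]
      field_simp
      ring
  exact hlt.false

lemma IsBoxCenter.isStrongNet_singleton (hc : IsBoxCenter ε f P c) (hcP : c ∈ P) :
    IsStrongNet ε P {B | IsBox f B} {c} := by
  refine ⟨singleton_subset_iff.2 hcP, fun B hB hheavy ↦ ⟨c, mem_singleton_self c, ?_⟩⟩
  by_contra hcB
  refine hheavy.not_ge ?_
  obtain ⟨i, hlt | hgt⟩ := IsBox.exists_forall_lt_or_forall_gt hB hcB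
  · exact (Nat.cast_le.2 (ncard_inter_le_card_filter hlt)).trans (hc i).1
  · exact (Nat.cast_le.2 (ncard_inter_le_card_filter hgt)).trans (hc i).2

lemma exists_isStrongNet_isBox_card_le_one [Fintype ι] [Nonempty ι] (f : ∀ i, X → α i)
    (P : Finset X) :
    ∃ Q, #Q ≤ 1 ∧ IsStrongNet (1 - 1 / (2 * Fintype.card ι)) P {B | IsBox f B} Q := by
  rcases P.eq_empty_or_nonempty with rfl | hP
  · exact ⟨∅, by simp, isStrongNet_empty⟩
  · obtain ⟨c, hcP, hc⟩ := exists_isBoxCenter f hP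
    exact ⟨{c}, (card_singleton c).le, hc.isStrongNet_singleton hcP⟩

lemma one_half_le_one_sub_one_div_sq {d : ℝ} (hd : 2 ≤ d) : 1 / 2 ≤ (1 - 1 / (2 * d)) ^ 2 := calc
  (1 / 2 : ℝ) ≤ (1 - 1 / (2 * 2)) ^ 2 := by norm_num
  _ ≤ (1 - 1 / (2 * d)) ^ 2 := by gcongr

lemma IsBoxCenter.exists_isStrongNet_card_le_one [Fintype ι] [Nontrivial ι]
    (hc : IsBoxCenter (1 - 1 / (2 * Fintype.card ι)) f P c) (i : ι) :
    ∃ Q, #Q ≤ 1 ∧ IsStrongNet ((1 - 1 / (2 * Fintype.card ι)) ^ 2) P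
      {B | IsBox f B ∧ ((∀ x ∈ B, f i x < f i c) ∨ ∀ x ∈ B, f i c < f i x)} Q := by
  have hd : (2 : ℝ) ≤ Fintype.card ι := mod_cast Fintype.one_lt_card (α := ι)
  have hε : (0 : ℝ) ≤ 1 - 1 / (2 * Fintype.card ι) :=
    sub_nonneg.2 (div_le_one_of_le₀ (by linarith) (by positivity))
  have hhalf := one_half_le_one_sub_one_div_sq hd
  have hsides : Disjoint (fun x ↦ f i x < f i c) fun x ↦ f i c < f i x :=
    Pi.disjoint_iff.2 fun x ↦ Prop.disjoint_iff.2 (not_and.2 fun h ↦ h.not_gt)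
  rw [sq] at hhalf ⊢
  exact exists_isStrongNet_card_le_one_of_disjoint (exists_isStrongNet_isBox_card_le_one f) hε
    hhalf hsides (hc i).1 (hc i).2

theorem strong_nine_sixteenths_net_size_three_general [Fintype ι] [Nontrivial ι]
    (f : ∀ i, X → α i) (P : Finset X) :
    ∃ Q, #Q ≤ Fintype.card ι + 1 ∧
      IsStrongNet ((1 - 1 / (2 * Fintype.card ι)) ^ 2) P {B | IsBox f B} Q := by
  classical
  rcases P.eq_empty_or_nonempty with rfl | hP
  · exact ⟨∅, by simp, isStrongNet_empty⟩
  obtain ⟨c, hcP, hc⟩ := exists_isBoxCenter f hP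
  choose Q hcard hQ using hc.exists_isStrongNet_card_le_one
  refine ⟨insert c (univ.biUnion Q), ?_, ?_, fun B hB hheavy ↦ ?_⟩
  · calc #(insert c (univ.biUnion Q)) ≤ #(univ.biUnion Q) + 1 := card_insert_le _ _
      _ ≤ Fintype.card ι * 1 + 1 := by
        gcongr
        exact card_biUnion_le_card_mul _ _ _ fun i _ ↦ hcard i
      _ = Fintype.card ι + 1 := by rw [mul_one]
  · exact insert_subset hcP (biUnion_subset.2 fun i _ ↦ (hQ i).1)
  · by_cases hcB : c ∈ B
    · exact ⟨c, mem_insert_self _ _, hcB⟩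
    obtain ⟨i, hi⟩ := IsBox.exists_forall_lt_or_forall_gt hB hcB
    obtain ⟨q, hq, hqB⟩ := (hQ i).2 B ⟨hB, hi⟩ hheavy
    exact ⟨q, mem_insert_of_mem (mem_biUnion.2 ⟨i, mem_univ i, hq⟩), hqB⟩

end Box

/-- Every finite planar point set admits a strong (9/16)-net of size 3 with respect to
axis-parallel rectangles. -/
theorem strong_nine_sixteenths_net_size_three (P : Finset (EuclideanSpace ℝ (Fin 2))) :
    ∃ Q : Finset (EuclideanSpace ℝ (Fin 2)), Q ⊆ P ∧ Q.card ≤ 3 ∧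
      ∀ R : Set (EuclideanSpace ℝ (Fin 2)), IsRect R →
        (9 / 16 : ℝ) * P.card < ((R ∩ ↑P).ncard : ℝ) → ∃ q ∈ Q, q ∈ R := by
  obtain ⟨Q, hcard, hQP, hnet⟩ := strong_nine_sixteenths_net_size_three_general
    (fun (i : Fin 2) (x : EuclideanSpace ℝ (Fin 2)) ↦ x i) P
  have hε : (1 - 1 / (2 * Fintype.card (Fin 2)) : ℝ) ^ 2 = 9 / 16 := by norm_num
  exact ⟨Q, hQP, hcard, fun R hR hheavy ↦ hnet R hR.isBox (hε ▸ hheavy)⟩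
end

section
/- For every integer i ≥ 2 and every finite set P of n points in ℝ², there exists a subset Q ⊆ P with |Q| ≤ i such that every closed halfplane H with |H ∩ P| > (2/(i+1))·n contains a point of Q. In other words, every finite planar point set admits a strong (2/(i+1))-net of size i with respect to halfplanes. -/
/-- A closed halfplane in ℝ²: `{x | a₁ x₀ + a₂ x₁ ≤ b}` with `(a₁, a₂) ≠ (0, 0)`. -/
def IsHalfplane (H : Set (EuclideanSpace ℝ (Fin 2))) : Prop :=
  ∃ a₁ a₂ b : ℝ, (a₁ ≠ 0 ∨ a₂ ≠ 0) ∧ H = {x | a₁ * x 0 + a₂ * x 1 ≤ b}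

/-!
For `i = 2`, Helly's theorem makes the hulls of all subsets containing more than two thirds of `P`
share a point. A frontier point `x` of the common intersection is a frontier point of one of these
hulls, so by Carathéodory it lies on a segment between two points of `P`. Every heavy halfplane
contains `x`, hence one of these two points.

For `i ≥ 3`, the extreme points of the hull of `P` hit every halfplane that meets `P`. Take a
minimal subset `Q` of them that is still a net: each `q ∈ Q` has a heavy halfplane meeting `Q` in
`q` only. If `Q` has at least four points, then no `p ∈ P` lies in three of these halfplanes.
Otherwise let them belong to `a`, `b`, `c`; then `p` lies in the triangle `abc`. For any fourth
point `d ∈ Q`, the diagonals of the convex quadrilateral on `a, b, c, d` cross; say they are `ad`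
and `bc`. So `p` lies in the triangle `abd` or `acd`, although the halfplane of `c` or of `b`,
respectively, contains `p` but none of the vertices. Counting incidences now gives
`#Q * (2 / (i + 1)) * #P < 2 * #P`, that is `#Q ≤ i`.

Of halfplanes only the convexity of both sides matters.
-/

open Finset Module
open scoped Convex

section StrongNet

variable {α : Type*} {ε : ℝ} {P Q : Finset α} {𝓢 : Set (Set α)}

/-- `Q` is a strong `ε`-net of `P` with respect to the family `𝓢`. -/
structure IsStrongNet_s13 (ε : ℝ) (P : Finset α) (𝓢 : Set (Set α)) (Q : Finset α) : Prop where
  subset : Q ⊆ P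
  exists_mem : ∀ S ∈ 𝓢, ε * #P < (S ∩ P).ncard → ∃ q ∈ Q, q ∈ S

theorem isStrongNet_empty_s13 (ε : ℝ) (𝓢 : Set (Set α)) : IsStrongNet_s13 ε ∅ 𝓢 ∅ :=
  ⟨Subset.rfl, fun S _ hS => by simp at hS⟩

theorem IsStrongNet_s13.exists_subset_private (hQ : IsStrongNet_s13 ε P 𝓢 Q) :
    ∃ R ⊆ Q, IsStrongNet_s13 ε P 𝓢 R ∧
      ∀ r ∈ R, ∃ S ∈ 𝓢, ε * #P < (S ∩ P).ncard ∧ S ∩ R = {r} := by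
  classical
  obtain ⟨R, hRQ, hR, hmin⟩ := exists_minimal_le_of_wellFoundedLT (IsStrongNet_s13 ε P 𝓢) Q hQ
  refine ⟨R, hRQ, hR, fun r hr => ?_⟩
  have herase : ¬ IsStrongNet_s13 ε P 𝓢 (R.erase r) := fun h =>
    notMem_erase r R (hmin h (erase_subset r R) hr)
  obtain ⟨S, hS, hheavy, hmiss⟩ : ∃ S ∈ 𝓢, ε * #P < (S ∩ P).ncard ∧ ∀ q ∈ R.erase r, q ∉ S := by
    by_contra! h
    exact herase ⟨(erase_subset r R).trans hR.subset, h⟩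
  have heq : ∀ q ∈ R, q ∈ S → q = r := fun q hq hqS =>
    by_contra fun hne => hmiss q (mem_erase.2 ⟨hne, hq⟩) hqS
  obtain ⟨q, hq, hqS⟩ := hR.exists_mem S hS hheavy
  obtain rfl := heq q hq hqS
  exact ⟨S, hS, hheavy, Set.eq_singleton_iff_unique_mem.2
    ⟨⟨hqS, hq⟩, fun x hx => heq x hx.2 hx.1⟩⟩

theorem ncard_inter_coe_eq_card_filter (S : Set α) [DecidablePred (· ∈ S)] (P : Finset α) :
    (S ∩ P).ncard = #{p ∈ P | p ∈ S} := by
  rw [← Set.ncard_coe_finset, coe_filter, Set.inter_comm]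
  rfl

open Classical in
theorem card_le_of_forall_card_filter_le {ι : Type*} {I : Finset ι} {S : ι → Set α} {k i : ℕ}
    (hk : ∀ p ∈ P, #{q ∈ I | p ∈ S q} ≤ k)
    (hS : ∀ q ∈ I, (k / (i + 1) : ℝ) * #P < (S q ∩ P).ncard) : #I ≤ i := by
  obtain rfl | hI := I.eq_empty_or_nonempty
  · simp
  have hcount : #I • ((k / (i + 1) : ℝ) * #P) < #P • (k : ℝ) :=
    card_nsmul_lt_card_nsmul_of_lt_of_le (fun q p => p ∈ S q) hI
      (fun q hq => by
        simpa only [ncard_inter_coe_eq_card_filter, bipartiteAbove] using hS q hq)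
      (fun p hp => by exact_mod_cast hk p hp)
  rw [nsmul_eq_mul, nsmul_eq_mul] at hcount
  by_contra! hlt
  refine hcount.not_ge ?_
  calc (#P * k : ℝ) = (i + 1) * (k / (i + 1) * #P) := by field_simp
    _ ≤ #I * (k / (i + 1) * #P) := by gcongr; exact_mod_cast hlt

theorem exists_mem_forall_mem_of_card_sdiff_lt [DecidableEq α] {F : Finset (Finset α)} {k : ℕ}
    (hP : P.Nonempty) (hF : #F ≤ k) (hsdiff : ∀ T ∈ F, k * #(P \ T) < #P) :
    ∃ p ∈ P, ∀ T ∈ F, p ∈ T := by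
  have hcover : #(F.biUnion (P \ ·)) < #P := by
    obtain rfl | hk := k.eq_zero_or_pos
    · simp_all
    calc #(F.biUnion (P \ ·)) ≤ #F * ((#P - 1) / k) :=
          card_biUnion_le_card_mul _ _ _ fun T hT => by
            rw [Nat.le_div_iff_mul_le hk, mul_comm]
            exact Nat.le_sub_one_of_lt (hsdiff T hT)
      _ ≤ k * ((#P - 1) / k) := by gcongr
      _ ≤ #P - 1 := Nat.mul_div_le _ _
      _ < #P := Nat.sub_one_lt hP.card_ne_zero
  obtain ⟨p, hpP, hp⟩ := exists_mem_notMem_of_card_lt_card hcover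
  simp only [mem_biUnion, mem_sdiff, not_exists, not_and, not_not] at hp
  exact ⟨p, hpP, fun T hT => hp T hT hpP⟩

end StrongNet

section Hemispace

variable {V : Type*} [AddCommGroup V] [Module ℝ V]

/-- A hemispace is a convex set with convex complement, for instance an open or closed halfspace
or the whole space. -/
structure IsHemispace (H : Set V) : Prop where
  convex : Convex ℝ H
  convex_compl : Convex ℝ Hᶜ

theorem IsHalfplane.isHemispace {H : Set (EuclideanSpace ℝ (Fin 2))} (hH : IsHalfplane H) :
    IsHemispace H := by
  obtain ⟨a₁, a₂, b, -, rfl⟩ := hH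
  have hlin : IsLinearMap ℝ fun x : EuclideanSpace ℝ (Fin 2) => a₁ * x 0 + a₂ * x 1 :=
    ⟨fun x y => by simp only [PiLp.add_apply]; ring,
      fun c x => by simp only [PiLp.smul_apply, smul_eq_mul]; ring⟩
  refine ⟨convex_halfSpace_le hlin b, ?_⟩
  simpa only [Set.compl_ofPred, not_le] using convex_halfSpace_gt hlin b

theorem exists_mem_of_mem_convexHull_of_convex_compl {H s : Set V} {x : V} (hH : Convex ℝ Hᶜ)
    (hxs : x ∈ convexHull ℝ s) (hxH : x ∈ H) : ∃ y ∈ s, y ∈ H := by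
  by_contra! h
  exact convexHull_min h hH hxs hxH

end Hemispace

section Helly

variable {V : Type*} [AddCommGroup V] [Module ℝ V] [FiniteDimensional ℝ V]

theorem biInter_convexHull_nonempty_of_card_sdiff_lt [DecidableEq V] {P : Finset V}
    (hP : P.Nonempty) {F : Finset (Finset V)}
    (hF : ∀ T ∈ F, (finrank ℝ V + 1) * #(P \ T) < #P) :
    (⋂ T ∈ F, convexHull ℝ (T : Set V)).Nonempty := by
  refine Convex.helly_theorem' (𝕜 := ℝ) (fun T _ => convex_convexHull ℝ _) fun I hI hcard => ?_
  obtain ⟨p, -, hp⟩ := exists_mem_forall_mem_of_card_sdiff_lt hP hcard fun T hT => hF T (hI hT)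
  exact ⟨p, Set.mem_iInter₂.2 fun T hT => subset_convexHull ℝ _ (hp T hT)⟩

end Helly

section Center

variable {V : Type*} [NormedAddCommGroup V] [NormedSpace ℝ V] [FiniteDimensional ℝ V]

theorem exists_finset_card_le_finrank_of_notMem_interior_convexHull {s : Set V} {x : V}
    (hx : x ∈ convexHull ℝ s) (hxi : x ∉ interior (convexHull ℝ s)) :
    ∃ t : Finset V, ↑t ⊆ s ∧ #t ≤ finrank ℝ V ∧ x ∈ convexHull ℝ (t : Set V) := by
  classical
  obtain ⟨ι, _, z, w, hzs, hz, hw_pos, hw_sum, hwx⟩ := eq_pos_convex_span_of_mem_convexHull hx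
  have hcard : Fintype.card ι ≤ finrank ℝ V + 1 :=
    hz.card_le_finrank_succ.trans (Nat.succ_le_succ (Submodule.finrank_le _))
  have hcard_ne : Fintype.card ι ≠ finrank ℝ V + 1 := fun h => by
    let b : AffineBasis ι ℝ V :=
      ⟨z, hz, hz.affineSpan_eq_top_iff_card_eq_finrank_add_one.2 h⟩
    have hcomb : univ.affineCombination ℝ b w = x :=
      (univ.affineCombination_eq_linear_combination z w hw_sum).trans hwx
    have hxb : x ∈ interior (convexHull ℝ (Set.range b)) := by
      rw [b.interior_convexHull]
      intro j
      rw [← hcomb, b.coord_apply_combination_of_mem (mem_univ j) hw_sum]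
      exact hw_pos j
    exact hxi (interior_mono (convexHull_mono hzs) hxb)
  refine ⟨univ.image z, by simpa using hzs, card_image_le.trans ?_, ?_⟩
  · rw [card_univ]
    omega
  · rw [← hwx]
    exact (convex_convexHull ℝ _).sum_mem (fun j _ => (hw_pos j).le) hw_sum
      fun j _ => subset_convexHull ℝ _ (by simp)

theorem exists_convexHull_inter_biInter_convexHull_nonempty [Nontrivial V]
    {F : Finset (Finset V)} (hF : F.Nonempty)
    (hne : (⋂ T ∈ F, convexHull ℝ (T : Set V)).Nonempty) :
    ∃ T ∈ F, ∃ t ⊆ T, #t ≤ finrank ℝ V ∧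
      (convexHull ℝ (t : Set V) ∩ ⋂ T ∈ F, convexHull ℝ (T : Set V)).Nonempty := by
  obtain ⟨T₀, hT₀⟩ := hF
  set C := ⋂ T ∈ F, convexHull ℝ (T : Set V) with hC
  have hC_closed : IsClosed C :=
    isClosed_biInter fun T _ => T.finite_toSet.isClosed_convexHull ℝ
  have hC_compact : IsCompact C := (T₀.finite_toSet.isCompact_convexHull ℝ).of_isClosed_subset
    hC_closed (Set.biInter_subset_of_mem hT₀)
  obtain ⟨x, hx⟩ : (frontier C).Nonempty :=
    nonempty_frontier_iff.2 ⟨hne, fun h => noncompact_univ V (h ▸ hC_compact)⟩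
  rw [hC_closed.frontier_eq, hC, F.interior_iInter] at hx
  obtain ⟨hxC, hxi⟩ := hx
  simp only [Set.mem_iInter, not_forall] at hxi
  obtain ⟨T, hT, hxT⟩ := hxi
  obtain ⟨t, htT, ht, hxt⟩ := exists_finset_card_le_finrank_of_notMem_interior_convexHull
    (Set.mem_iInter₂.1 hxC T hT) hxT
  exact ⟨T, hT, t, mod_cast htT, ht, x, hxt, hxC⟩

theorem exists_isStrongNet_card_le_finrank [Nontrivial V] (P : Finset V) :
    ∃ Q : Finset V, #Q ≤ finrank ℝ V ∧
      IsStrongNet_s13 (finrank ℝ V / (finrank ℝ V + 1)) P {H | IsHemispace H} Q := by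
  classical
  set d := finrank ℝ V
  obtain rfl | hP := P.eq_empty_or_nonempty
  · exact ⟨∅, by simp, isStrongNet_empty_s13 _ _⟩
  let F : Finset (Finset V) := {T ∈ P.powerset | (d + 1) * #(P \ T) < #P}
  have hPF : P ∈ F := by simp [F, hP.card_pos]
  obtain ⟨T, hT, Q, hQT, hQ, x, hxQ, hxF⟩ :=
    exists_convexHull_inter_biInter_convexHull_nonempty ⟨P, hPF⟩
      (biInter_convexHull_nonempty_of_card_sdiff_lt hP fun T hT => (mem_filter.1 hT).2)
  refine ⟨Q, hQ, hQT.trans (mem_powerset.1 (mem_filter.1 hT).1), fun H hH hheavy => ?_⟩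
  have hHF : {p ∈ P | p ∈ H} ∈ F := by
    refine mem_filter.2 ⟨mem_powerset.2 (filter_subset _ _), ?_⟩
    have hsum := card_sdiff_add_card_eq_card (filter_subset (· ∈ H) P)
    have hlt : (d * #P : ℝ) < (d + 1) * #{p ∈ P | p ∈ H} := by
      rwa [ncard_inter_coe_eq_card_filter, div_mul_eq_mul_div, div_lt_iff₀' (by positivity)]
        at hheavy
    have hlt' : d * #P < (d + 1) * #{p ∈ P | p ∈ H} := by exact_mod_cast hlt
    nlinarith
  have hxH : x ∈ H := convexHull_min (fun p hp => (mem_filter.1 hp).2) hH.convex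
    (Set.mem_iInter₂.1 hxF _ hHF)
  exact exists_mem_of_mem_convexHull_of_convex_compl hH.convex_compl hxQ hxH

end Center

section Planar

variable {V : Type*} [AddCommGroup V] [Module ℝ V] {a b c d p x : V}

theorem planar_radon [FiniteDimensional ℝ V] (hV : finrank ℝ V ≤ 2) (a b c d : V) :
    a ∈ convexHull ℝ {b, c, d} ∨ b ∈ convexHull ℝ {a, c, d} ∨
    c ∈ convexHull ℝ {a, b, d} ∨ d ∈ convexHull ℝ {a, b, c} ∨
    ¬ Disjoint [a -[ℝ] b] [c -[ℝ] d] ∨ ¬ Disjoint [a -[ℝ] c] [b -[ℝ] d] ∨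
    ¬ Disjoint [a -[ℝ] d] [b -[ℝ] c] := by
  have hdep : ¬ AffineIndependent ℝ ![a, b, c, d] := fun h => by
    have hcard := h.card_le_finrank_succ
    have hrank := Submodule.finrank_le (vectorSpan ℝ (Set.range ![a, b, c, d]))
    rw [Fintype.card_fin] at hcard
    omega
  obtain ⟨I, x, hxI, hxI'⟩ := Convex.radon_partition hdep
  lift I to Finset (Fin 4) using I.toFinite
  rw [← coe_compl] at hxI'
  have hne {J : Finset (Fin 4)} (hx : x ∈ convexHull ℝ (![a, b, c, d] '' J)) : J.Nonempty :=
    mod_cast (convexHull_nonempty_iff.1 ⟨x, hx⟩).of_image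
  have hsplit : ∀ I : Finset (Fin 4), I.Nonempty → Iᶜ.Nonempty → ∃ J, (J = I ∨ J = Iᶜ) ∧
      (J = {0} ∧ Jᶜ = {1, 2, 3} ∨ J = {1} ∧ Jᶜ = {0, 2, 3} ∨ J = {2} ∧ Jᶜ = {0, 1, 3} ∨
        J = {3} ∧ Jᶜ = {0, 1, 2} ∨ J = {0, 1} ∧ Jᶜ = {2, 3} ∨ J = {0, 2} ∧ Jᶜ = {1, 3} ∨
        J = {0, 3} ∧ Jᶜ = {1, 2}) := by decide
  obtain ⟨J, hJI, hJ⟩ := hsplit I (hne hxI) (hne hxI')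
  obtain ⟨hxJ, hxJ'⟩ : x ∈ convexHull ℝ (![a, b, c, d] '' J) ∧
      x ∈ convexHull ℝ (![a, b, c, d] '' ↑Jᶜ) := by
    obtain rfl | rfl := hJI
    · exact ⟨hxI, hxI'⟩
    · exact ⟨hxI', by rwa [compl_compl]⟩
  rw [Set.not_disjoint_iff, Set.not_disjoint_iff, Set.not_disjoint_iff]
  refine hJ.imp ?_ <| Or.imp ?_ <| Or.imp ?_ <| Or.imp ?_ <| Or.imp ?_ <| Or.imp ?_ ?_ <;>
    rintro ⟨hJ, hJ'⟩ <;> rw [hJ] at hxJ <;> rw [hJ'] at hxJ' <;>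
    simp only [coe_insert, coe_singleton, Set.image_insert_eq, Set.image_singleton,
      convexHull_singleton, Set.mem_singleton_iff, convexHull_pair, Matrix.cons_val] at hxJ hxJ'
  iterate 4 exact hxJ ▸ hxJ'
  iterate 3 exact ⟨x, hxJ, hxJ'⟩

open AffineMap in
theorem segment_subset_union_of_mem (hx : x ∈ [a -[ℝ] b]) :
    [a -[ℝ] b] ⊆ [a -[ℝ] x] ∪ [x -[ℝ] b] := by
  rw [segment_eq_image_lineMap] at hx
  obtain ⟨s, ⟨hs₀, hs₁⟩, rfl⟩ := hx
  calc [a -[ℝ] b] = lineMap a b '' Set.Icc (0 : ℝ) 1 := segment_eq_image_lineMap ℝ a b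
    _ = lineMap a b '' [0 -[ℝ] s] ∪ lineMap a b '' [s -[ℝ] 1] := by
      rw [segment_eq_Icc hs₀, segment_eq_Icc hs₁, ← Set.image_union,
        Set.Icc_union_Icc_eq_Icc hs₀ hs₁]
    _ ⊆ [a -[ℝ] lineMap a b s] ∪ [lineMap a b s -[ℝ] b] := by
      simp [image_segment]

theorem mem_convexHull_triple_or_of_not_disjoint (hcross : ¬ Disjoint [a -[ℝ] d] [b -[ℝ] c])
    (hp : p ∈ convexHull ℝ {a, b, c}) :
    p ∈ convexHull ℝ {a, b, d} ∨ p ∈ convexHull ℝ {a, c, d} := by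
  obtain ⟨x, hxad, hxbc⟩ := Set.not_disjoint_iff.1 hcross
  have hsub (e : V) {y : V} (hy : y ∈ [e -[ℝ] x]) (hpy : p ∈ [a -[ℝ] y]) :
      p ∈ convexHull ℝ {a, e, d} := by
    have hconv := convex_convexHull ℝ {a, e, d}
    have hx : x ∈ convexHull ℝ {a, e, d} :=
      segment_subset_convexHull (by simp) (by simp) hxad
    exact hconv.segment_subset (subset_convexHull ℝ _ (by simp))
      (hconv.segment_subset (subset_convexHull ℝ _ (by simp)) hx hy) hpy
  rw [← convexJoin_singleton_segment, mem_convexJoin] at hp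
  obtain ⟨_, rfl, y, hy, hpy⟩ := hp
  exact (segment_subset_union_of_mem hxbc hy).imp (hsub b · hpy) fun hxc =>
    hsub c (segment_symm ℝ x c ▸ hxc) hpy

end Planar

section Private

variable {V : Type*} [AddCommGroup V] [Module ℝ V] {K Q : Set V} {a b c d p : V}
  {A B C : Set V}

theorem notMem_convexHull_triple_of_mem_extremePoints (hK : Convex ℝ K)
    (ha : a ∈ K.extremePoints ℝ) (hb : b ∈ K) (hc : c ∈ K) (hd : d ∈ K)
    (hab : a ≠ b) (hac : a ≠ c) (had : a ≠ d) : a ∉ convexHull ℝ {b, c, d} := by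
  intro h
  have hsub : convexHull ℝ {b, c, d} ⊆ K :=
    convexHull_min (by simp [Set.insert_subset_iff, hb, hc, hd]) hK
  have hmem : a ∈ ({b, c, d} : Set V) := extremePoints_convexHull_subset
    (inter_extremePoints_subset_extremePoints_of_subset hsub ⟨h, ha⟩)
  simp [hab, hac, had] at hmem

/-- A private hemispace of `q` with respect to `Q` is a hemispace that meets `Q` in `q` only. -/
structure IsPrivateHemispace (Q : Set V) (q : V) (H : Set V) : Prop extends IsHemispace H where
  inter_eq : H ∩ Q = {q}

namespace IsPrivateHemispace

theorem mem (hA : IsPrivateHemispace Q a A) : a ∈ A :=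
  (hA.inter_eq.ge rfl).1

theorem mem_base (hA : IsPrivateHemispace Q a A) : a ∈ Q :=
  (hA.inter_eq.ge rfl).2

theorem eq_of_mem (hA : IsPrivateHemispace Q a A) (hbQ : b ∈ Q) (hbA : b ∈ A) : b = a :=
  hA.inter_eq.le ⟨hbA, hbQ⟩

theorem mem_of_mem_convexHull (hA : IsPrivateHemispace Q a A) {t : Set V} (htQ : t ⊆ Q)
    (hpA : p ∈ A) (hpt : p ∈ convexHull ℝ t) : a ∈ t := by
  obtain ⟨y, hyt, hyA⟩ :=
    exists_mem_of_mem_convexHull_of_convex_compl hA.convex_compl hpt hpA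
  exact hA.eq_of_mem (htQ hyt) hyA ▸ hyt

theorem disjoint_segment (hA : IsPrivateHemispace Q a A) (hpA : p ∈ A) (hb : b ∈ Q) (hc : c ∈ Q)
    (hab : a ≠ b) (hac : a ≠ c) : Disjoint [p -[ℝ] a] [b -[ℝ] c] := by
  refine Set.disjoint_left.2 fun x hxpa hxbc => ?_
  have hxA : x ∈ A := hA.convex.segment_subset hpA hA.mem hxpa
  rw [← convexHull_pair] at hxbc
  have := hA.mem_of_mem_convexHull (Set.pair_subset hb hc) hxA hxbc
  simp_all

theorem disjoint_segment_of_mem_convexHull (hB : IsPrivateHemispace Q b B)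
    (hC : IsPrivateHemispace Q c C) (ha : a ∈ Q) (hd : d ∈ Q) (hab : a ≠ b) (hac : a ≠ c)
    (hbc : b ≠ c) (hbd : b ≠ d) (hcd : c ≠ d) (hpB : p ∈ B) (hpC : p ∈ C)
    (hp : p ∈ convexHull ℝ {a, b, c}) : Disjoint [a -[ℝ] d] [b -[ℝ] c] := by
  by_contra hcross
  rcases mem_convexHull_triple_or_of_not_disjoint hcross hp with hp | hp
  · exact absurd (hC.mem_of_mem_convexHull (t := {a, b, d})
      (by simp [Set.insert_subset_iff, ha, hB.mem_base, hd]) hpC hp)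
      (by simp [hac.symm, hbc.symm, hcd])
  · exact absurd (hB.mem_of_mem_convexHull (t := {a, c, d})
      (by simp [Set.insert_subset_iff, ha, hC.mem_base, hd]) hpB hp)
      (by simp [hab.symm, hbc, hbd])

theorem mem_convexHull_triple [FiniteDimensional ℝ V] (hV : finrank ℝ V ≤ 2) (hK : Convex ℝ K)
    (hQK : Q ⊆ K.extremePoints ℝ) (hA : IsPrivateHemispace Q a A)
    (hB : IsPrivateHemispace Q b B) (hC : IsPrivateHemispace Q c C)
    (hab : a ≠ b) (hac : a ≠ c) (hbc : b ≠ c)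
    (hpK : p ∈ K) (hpA : p ∈ A) (hpB : p ∈ B) (hpC : p ∈ C) : p ∈ convexHull ℝ {a, b, c} := by
  have hextreme {x y z : V} (hx : x ∈ Q) (hy : y ∈ Q) (hz : z ∈ Q) (hxp : x ≠ p) (hxy : x ≠ y)
      (hxz : x ≠ z) : x ∉ convexHull ℝ {p, y, z} :=
    notMem_convexHull_triple_of_mem_extremePoints hK (hQK hx) hpK (hQK hy).1 (hQK hz).1 hxp hxy hxz
  have ha := hA.mem_base
  have hb := hB.mem_base
  have hc := hC.mem_base
  have hap : a ≠ p := fun h => hab (hB.eq_of_mem ha (h ▸ hpB))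
  have hbp : b ≠ p := fun h => hab.symm (hA.eq_of_mem hb (h ▸ hpA))
  have hcp : c ≠ p := fun h => hac.symm (hA.eq_of_mem hc (h ▸ hpA))
  rcases planar_radon hV p a b c with hp | h | h | h | h | h | h
  · exact hp
  · exact absurd h (hextreme ha hb hc hap hab hac)
  · exact absurd h (hextreme hb ha hc hbp hab.symm hbc)
  · exact absurd h (hextreme hc ha hb hcp hac.symm hbc.symm)
  · exact absurd (hA.disjoint_segment hpA hb hc hab hac) h
  · exact absurd (hB.disjoint_segment hpB ha hc hab.symm hbc) h
  · exact absurd (hC.disjoint_segment hpC ha hb hac.symm hbc.symm) h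

theorem notMem_of_mem_of_mem [FiniteDimensional ℝ V] (hV : finrank ℝ V ≤ 2) (hK : Convex ℝ K)
    (hQK : Q ⊆ K.extremePoints ℝ) (hA : IsPrivateHemispace Q a A)
    (hB : IsPrivateHemispace Q b B) (hC : IsPrivateHemispace Q c C) (hd : d ∈ Q)
    (hab : a ≠ b) (hac : a ≠ c) (hbc : b ≠ c) (had : a ≠ d) (hbd : b ≠ d) (hcd : c ≠ d)
    (hpK : p ∈ K) (hpA : p ∈ A) (hpB : p ∈ B) : p ∉ C := by
  intro hpC
  have hextreme {w x y z : V} (hw : w ∈ Q) (hx : x ∈ Q) (hy : y ∈ Q) (hz : z ∈ Q) (hwx : w ≠ x)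
      (hwy : w ≠ y) (hwz : w ≠ z) : w ∉ convexHull ℝ {x, y, z} :=
    notMem_convexHull_triple_of_mem_extremePoints hK (hQK hw) (hQK hx).1 (hQK hy).1 (hQK hz).1
      hwx hwy hwz
  have ha := hA.mem_base
  have hb := hB.mem_base
  have hc := hC.mem_base
  have hp : p ∈ convexHull ℝ {a, b, c} :=
    mem_convexHull_triple hV hK hQK hA hB hC hab hac hbc hpK hpA hpB hpC
  rcases planar_radon hV d a b c with h | h | h | h | h | h | h
  · exact hextreme hd ha hb hc had.symm hbd.symm hcd.symm h
  · exact hextreme ha hd hb hc had hab hac h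
  · exact hextreme hb hd ha hc hbd hab.symm hbc h
  · exact hextreme hc hd ha hb hcd hac.symm hbc.symm h
  · rw [segment_symm ℝ d a] at h
    exact h (disjoint_segment_of_mem_convexHull hB hC ha hd hab hac hbc hbd hcd hpB hpC hp)
  · rw [segment_symm ℝ d b] at h
    rw [Set.insert_comm] at hp
    exact h (disjoint_segment_of_mem_convexHull hA hC hb hd hab.symm hbc hac had hcd hpA hpC hp)
  · rw [segment_symm ℝ d c] at h
    rw [Set.pair_comm, Set.insert_comm] at hp
    exact h (disjoint_segment_of_mem_convexHull hA hB hc hd hac.symm hbc.symm hab had hbd hpA hpB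
      hp)

open Classical in
theorem card_filter_mem_le_two [FiniteDimensional ℝ V] (hV : finrank ℝ V ≤ 2) (hK : Convex ℝ K)
    {Q : Finset V} (hQK : ↑Q ⊆ K.extremePoints ℝ) (hQ : 3 < #Q) {H : V → Set V}
    (hH : ∀ q ∈ Q, IsPrivateHemispace ↑Q q (H q)) (hp : p ∈ K) :
    #{q ∈ Q | p ∈ H q} ≤ 2 := by
  by_contra! h
  obtain ⟨a, ha, b, hb, c, hc, hab, hac, hbc⟩ := two_lt_card.1 h
  obtain ⟨d, hdQ, hd⟩ := exists_mem_notMem_of_card_lt_card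
    (card_le_three (a := a) (b := b) (c := c) |>.trans_lt hQ)
  simp only [mem_insert, mem_singleton, not_or] at hd
  rw [mem_filter] at ha hb hc
  exact notMem_of_mem_of_mem hV hK hQK (hH a ha.1) (hH b hb.1) (hH c hc.1) hdQ
    hab hac hbc (Ne.symm hd.1) (Ne.symm hd.2.1) (Ne.symm hd.2.2) hp ha.2 hb.2 hc.2

end IsPrivateHemispace

end Private

section PlanarNet

variable {V : Type*} [NormedAddCommGroup V] [NormedSpace ℝ V]

open Classical in
theorem isStrongNet_extremePoints {ε : ℝ} (hε : 0 ≤ ε) {𝓢 : Set (Set V)}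
    (h𝓢 : ∀ H ∈ 𝓢, Convex ℝ Hᶜ) (P : Finset V) :
    IsStrongNet_s13 ε P 𝓢 {q ∈ P | q ∈ (convexHull ℝ (P : Set V)).extremePoints ℝ} := by
  refine ⟨filter_subset _ _, fun H hH hheavy => ?_⟩
  obtain ⟨p, hpH, hpP⟩ : (H ∩ P).Nonempty := by
    refine Set.nonempty_of_ncard_ne_zero fun h => ?_
    rw [h, Nat.cast_zero] at hheavy
    exact hheavy.not_ge (by positivity)
  have hext : (convexHull ℝ (P : Set V)).extremePoints ℝ ⊆ P := extremePoints_convexHull_subset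
  have hpext : p ∈ convexHull ℝ ((convexHull ℝ (P : Set V)).extremePoints ℝ) := by
    have hclosed := (P.finite_toSet.subset hext).isClosed_convexHull ℝ
    rw [← hclosed.closure_eq, closure_convexHull_extremePoints
      (P.finite_toSet.isCompact_convexHull ℝ) (convex_convexHull ℝ _)]
    exact subset_convexHull ℝ _ hpP
  obtain ⟨q, hq, hqH⟩ := exists_mem_of_mem_convexHull_of_convex_compl (h𝓢 H hH) hpext hpH
  exact ⟨q, mem_filter.2 ⟨hext hq, hq⟩, hqH⟩

theorem exists_isStrongNet_card_le_of_three_le [FiniteDimensional ℝ V] (hV : finrank ℝ V ≤ 2)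
    {i : ℕ} (hi : 3 ≤ i) (P : Finset V) :
    ∃ Q : Finset V, #Q ≤ i ∧ IsStrongNet_s13 (2 / (i + 1)) P {H | IsHemispace H} Q := by
  classical
  obtain ⟨Q, hQext, hQ, hprivate⟩ :=
    (isStrongNet_extremePoints (ε := 2 / (i + 1)) (by positivity)
      (fun _ => IsHemispace.convex_compl) P).exists_subset_private
  choose! H hH hheavy hHQ using hprivate
  refine ⟨Q, ?_, hQ⟩
  obtain hQ3 | hQ3 := le_or_gt #Q 3
  · exact hQ3.trans hi
  refine card_le_of_forall_card_filter_le (k := 2) (fun p hp => ?_) (mod_cast hheavy)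
  exact IsPrivateHemispace.card_filter_mem_le_two hV (convex_convexHull ℝ _)
    (fun q hq => (mem_filter.1 (hQext hq)).2) hQ3 (fun q hq => ⟨hH q hq, hHQ q hq⟩)
    (subset_convexHull ℝ _ hp)

theorem strong_halfplane_net_general (hV : finrank ℝ V = 2) (i : ℕ) (hi : 2 ≤ i) (P : Finset V) :
    ∃ Q : Finset V, #Q ≤ i ∧ IsStrongNet_s13 (2 / (i + 1)) P {H | IsHemispace H} Q := by
  have : FiniteDimensional ℝ V := .of_finrank_pos (by omega)
  have : Nontrivial V := nontrivial_of_finrank_pos (R := ℝ) (by omega)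
  obtain rfl | hi := hi.eq_or_lt
  · simpa only [hV, Nat.cast_ofNat] using exists_isStrongNet_card_le_finrank P
  · exact exists_isStrongNet_card_le_of_three_le hV.le hi P

end PlanarNet

/-- Every finite planar point set admits a strong `2/(i+1)`-net of size `i` with respect to
closed halfplanes, for every `i ≥ 2`. -/
theorem strong_halfplane_net (i : ℕ) (hi : 2 ≤ i) (P : Finset (EuclideanSpace ℝ (Fin 2))) :
    ∃ Q : Finset (EuclideanSpace ℝ (Fin 2)), Q ⊆ P ∧ Q.card ≤ i ∧
      ∀ H : Set (EuclideanSpace ℝ (Fin 2)), IsHalfplane H →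
        (2 / ((i : ℝ) + 1)) * P.card < ((H ∩ ↑P).ncard : ℝ) → ∃ q ∈ Q, q ∈ H := by
  obtain ⟨Q, hQ, hnet⟩ := strong_halfplane_net_general (by simp) i hi P
  exact ⟨Q, hnet.subset, hQ, fun H hH => hnet.exists_mem H hH.isHemispace⟩
end
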